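/- arXiv:2402.11233 — 2 statements merged into one kernel-verified Lean document; each statement's English description precedes it below -/
import Mathlib

section
/- Fix n ∈ ℕ and ν ∈ ℂ, and let J ⊆ (0,∞) be an open interval such that D_{n,ν}(2x), D_{n+1,ν}(2x), D'¹_{n,ν}(2x) and D'¹_{n+1,ν}(2x) are all nonzero for every x ∈ J. Define a(x) = D'¹_{n+1,ν}(2x) · D_{n,ν}(2x) / ( D_{n+1,ν}(2x) · D'¹_{n,ν}(2x) ) for x ∈ J (this equals the ratio −π_{n+1}(0)/π_n(0) of constant terms of the associated monic orthogonal polynomials at t = 2x). Then a is twice differentiable on J, never zero, and satisfies the Painlevé III equation a''(x) = a'(x)²/a(x) − a'(x)/x + (4/x)·((ν−n)·a(x)² + n + ν + 1) + 4·a(x)³ − 4/a(x) for all x ∈ J. -/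
/-!
The proof goes through the biorthogonal polynomials of the moments `c_k = I_{k-ν}(2x)`. Let `π_n` be
the monic polynomial of degree `n` whose moments `∑ⱼ pⱼ c_{i-j}`, `0 ≤ i < n`, vanish, and let `ψ_n`
be its analogue for the reflected moments `c_{-k}`. Cramer's rule gives `π_n(0) = (-1)^n D'¹_n / D_n`
(`opoly_coeff_zero`), so that `a = -π_{n+1}(0) / π_n(0)`.

The Bessel functions satisfy `∂ₓ c_k = c_{k-1} + c_{k+1}` and
`x (c_{k-1} - c_{k+1}) = (k - ν) c_k`. The first relation gives the moments of `∂ₓ π_n`, the second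
those of `z π_n' - n π_n`; both are polynomials of degree `< n`, hence determined by their first `n`
moments when `D_n ≠ 0` (`eq_zero_of_mom`). Combining them with the Szegő recursion (`IsOP.szego`) and
writing `α_m = π_m(0)`, `β_m = ψ_m(0)`, one gets
* `∂ₓ α_n = 2 (1 - α_n β_n) α_{n+1} + (n/x) α_n`, and the same with `α`, `β` exchanged
  (`IsOP.flow_up`);
* `∂ₓ α_{n+1} = -2 (1 - α_{n+1} β_{n+1}) α_n - ((n+1)/x) α_{n+1}` (`IsOP.flow_down`);
* the integral `x (α_{n+1} β_n - α_n β_{n+1}) = ν` (`IsOP.integral`).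

The integral eliminates `β_{n+1}`, and what remains is a closed first-order system for `a` and
`u = 1 - α_n β_n` (`ratio_system`):
`a' = 2 - 2a² + 4ua² - (2n+1+2ν) a/x`, `u' = 2u (2a(1-u) + ν/x) - 2n(1-u)/x`.
Eliminating `u` yields Painlevé III. Only `D_n`, `D_{n+1}` and `D'¹_n` are ever divided by, besides
the nonvanishing `a` itself; in particular no determinant of order `n-1` or `n+2` needs to be nonzero.
-/

/-- The modified Bessel function of the first kind `I_μ(t)`, for complex order `μ`
and real argument `t`, defined by its convergent power series, with
`(t/2)^μ := exp(μ · log(t/2))` using the real logarithm. -/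
noncomputable def besselI (μ : ℂ) (t : ℝ) : ℂ :=
  ∑' k : ℕ, Complex.exp ((2 * (k : ℂ) + μ) * (Real.log (t / 2) : ℂ)) /
    ((k.factorial : ℂ) * Complex.Gamma ((k : ℂ) + μ + 1))

/-- The Toeplitz determinant `D_{n,ν}(t) = det( I_{i-j-ν}(t) )_{i,j=0}^{n-1}`
(with `D_{0,ν}(t) = 1`). -/
noncomputable def toeplitzD (n : ℕ) (ν : ℂ) (t : ℝ) : ℂ :=
  Matrix.det (Matrix.of fun i j : Fin n => besselI (((i : ℕ) : ℂ) - ((j : ℕ) : ℂ) - ν) t)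

/-- The shifted Toeplitz determinant `D'¹_{n,ν}(t) = det( I_{i-j-1-ν}(t) )_{i,j=0}^{n-1}`
(with `D'¹_{0,ν}(t) = 1`). -/
noncomputable def toeplitzD1 (n : ℕ) (ν : ℂ) (t : ℝ) : ℂ :=
  Matrix.det (Matrix.of fun i j : Fin n => besselI (((i : ℕ) : ℂ) - ((j : ℕ) : ℂ) - 1 - ν) t)

/-! ### Moments, biorthogonal polynomials and their recursions -/

open Polynomial in
/-- The `i`-th moment `∑ⱼ pⱼ c_{i-j}` of a polynomial `p = ∑ⱼ pⱼ zʲ`, i.e. the value at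
`z^{-i} p(z)` of the linear functional sending `z^k` to `c_{-k}`. -/
noncomputable def mom (c : ℤ → ℂ) (i : ℤ) : ℂ[X] →ₗ[ℂ] ℂ :=
  Polynomial.lsum fun j : ℕ => (c (i - j)) • (LinearMap.id : ℂ →ₗ[ℂ] ℂ)

/-- The moments of the reflected functional, `k ↦ c_{-k}`. -/
def dualMom (c : ℤ → ℂ) : ℤ → ℂ := fun k => c (-k)

/-- The Toeplitz determinant of order `n` of the moment sequence `c`. -/
noncomputable def tdet (c : ℤ → ℂ) (n : ℕ) : ℂ :=
  Matrix.det (Matrix.of fun i j : Fin n => c ((i : ℕ) - (j : ℕ)))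

/-- `P` is the monic orthogonal polynomial of degree `n`: it is monic of degree `n`, and its moments
of index `0, …, n-1` vanish. -/
structure IsOP (c : ℤ → ℂ) (n : ℕ) (P : Polynomial ℂ) : Prop where
  monic : P.coeff n = 1
  deg : ∀ j, n < j → P.coeff j = 0
  orth : ∀ i : ℕ, i < n → mom c i P = 0

section Algebra

open Polynomial

lemma mom_monomial (c : ℤ → ℂ) (i : ℤ) (j : ℕ) (a : ℂ) :
    mom c i (monomial j a) = c (i - j) * a := by
  simp [mom, Polynomial.lsum, Polynomial.sum_monomial_index]

lemma mom_eq_sum (c : ℤ → ℂ) (i : ℤ) {p : ℂ[X]} {N : ℕ} (h : ∀ j, N ≤ j → p.coeff j = 0) :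
    mom c i p = ∑ j ∈ Finset.range N, p.coeff j * c (i - j) := by
  conv_lhs => rw [p.as_sum_range' (N + 1) (by
    have := (Polynomial.natDegree_le_iff_coeff_eq_zero (p := p) (n := N)).2
      (fun j hj => h j hj.le)
    omega)]
  rw [map_sum, Finset.sum_range_succ]
  simp [mom_monomial, h N le_rfl, mul_comm]

lemma mom_X_mul (c : ℤ → ℂ) (i : ℤ) (p : ℂ[X]) : mom c i (X * p) = mom c (i - 1) p := by
  induction p using Polynomial.induction_on' with
  | add p q hp hq => rw [mul_add, map_add, map_add, hp, hq]
  | monomial j a =>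
    rw [X_mul_monomial, mom_monomial, mom_monomial]
    congr 2
    push_cast
    ring

/-- The three-term recurrence of the moments turns the Euler operator `z d/dz` into shifts of the
moment index. -/
lemma mom_X_mul_derivative {c : ℤ → ℂ} {x ν : ℂ}
    (hrec : ∀ k : ℤ, x * (c (k - 1) - c (k + 1)) = (k - ν) * c k) (i : ℤ) (p : ℂ[X]) :
    mom c i (X * derivative p) =
      (i - ν) * mom c i p - x * (mom c (i - 1) p - mom c (i + 1) p) := by
  induction p using Polynomial.induction_on' with
  | add p q hp hq =>
    simp only [map_add, mul_add, hp, hq]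
    ring
  | monomial j a =>
    have h := hrec (i - j)
    have e : X * derivative (monomial j a) = monomial j (a * (j : ℂ)) := by
      rw [derivative_monomial]
      cases j with
      | zero => simp
      | succ j => rw [X_mul_monomial]; rfl
    rw [e]
    simp only [mom_monomial]
    rw [show i - 1 - (j : ℤ) = i - j - 1 by ring, show i + 1 - (j : ℤ) = i - j + 1 by ring]
    push_cast at h
    linear_combination a * h

/-- If `D_n ≠ 0`, a polynomial of degree `< n` whose first `n` moments vanish is zero. -/
lemma eq_zero_of_mom {c : ℤ → ℂ} {n : ℕ} (hD : tdet c n ≠ 0) {p : ℂ[X]}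
    (hp : ∀ j, n ≤ j → p.coeff j = 0) (h : ∀ i : ℕ, i < n → mom c i p = 0) : p = 0 := by
  have hv := Matrix.eq_zero_of_mulVec_eq_zero hD (v := fun j : Fin n => p.coeff j) (by
    ext i
    have := h i i.2
    rw [mom_eq_sum c i hp, Finset.sum_range] at this
    simpa [Matrix.mulVec, dotProduct, mul_comm] using this)
  ext j
  by_cases hj : j < n
  · simpa using congrFun hv ⟨j, hj⟩
  · simpa using hp j (not_lt.1 hj)

lemma tdet_dualMom (c : ℤ → ℂ) (n : ℕ) : tdet (dualMom c) n = tdet c n := by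
  rw [tdet, tdet, ← Matrix.det_transpose]
  congr 1
  ext i j
  simp [dualMom]

lemma dualMom_dualMom (c : ℤ → ℂ) : dualMom (dualMom c) = c := by
  ext k
  simp [dualMom]

/-- Both sides are `∑ᵢⱼ qᵢ pⱼ c_{i+s-j}`. -/
lemma pairing_symm (c : ℤ → ℂ) (s : ℤ) {p q : ℂ[X]} {N M : ℕ} (hp : ∀ j, N ≤ j → p.coeff j = 0)
    (hq : ∀ j, M ≤ j → q.coeff j = 0) :
    ∑ i ∈ Finset.range M, q.coeff i * mom c (i + s) p =
      ∑ j ∈ Finset.range N, p.coeff j * mom (dualMom c) (j - s) q := by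
  simp_rw [mom_eq_sum c _ hp, mom_eq_sum (dualMom c) _ hq, Finset.mul_sum]
  rw [Finset.sum_comm]
  refine Finset.sum_congr rfl fun j _ => Finset.sum_congr rfl fun i _ => ?_
  rw [dualMom, show -((j : ℤ) - s - i) = i + s - j by ring]
  ring

lemma mom_reflect (c : ℤ → ℂ) (i : ℤ) {n : ℕ} {q : ℂ[X]} (hq : ∀ j, n < j → q.coeff j = 0) :
    mom c i (q.reflect n) = mom (dualMom c) (n - i) q := by
  rw [mom_eq_sum (dualMom c) _ (N := n + 1) fun j hj => hq j hj,
    mom_eq_sum c _ (N := n + 1) (fun j hj => by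
      rw [coeff_reflect, revAt_eq_self_of_lt hj]; exact hq j hj),
    ← Finset.sum_range_reflect]
  refine Finset.sum_congr rfl fun j hj => ?_
  have hj' : j ≤ n := Nat.lt_succ_iff.1 (Finset.mem_range.1 hj)
  rw [coeff_reflect, show n + 1 - 1 - j = n - j by omega, revAt_le (Nat.sub_le _ _),
    Nat.sub_sub_self hj', dualMom]
  congr 2
  push_cast [hj']
  ring

/-- The norm `h_n` (the `n`-th moment of `π_n`) does not vanish when `D_{n+1} ≠ 0`. -/
lemma IsOP.norm_ne_zero {c : ℤ → ℂ} {n : ℕ} {P : ℂ[X]} (hP : IsOP c n P)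
    (hD1 : tdet c (n + 1) ≠ 0) : mom c n P ≠ 0 := by
  intro h
  have h0 : P = 0 := eq_zero_of_mom hD1 (fun j hj => hP.deg j hj) fun i hi => by
    rcases Nat.lt_succ_iff_lt_or_eq.1 hi with hi | rfl
    · exact hP.orth i hi
    · exact h
  have := hP.monic
  simp [h0] at this

/-- The two biorthogonal families have the same norms. -/
lemma IsOP.norm_dual {c : ℤ → ℂ} {n : ℕ} {P Q : ℂ[X]} (hP : IsOP c n P)
    (hQ : IsOP (dualMom c) n Q) : mom (dualMom c) n Q = mom c n P := by
  have h := pairing_symm c 0 (N := n + 1) (M := n + 1) hP.deg hQ.deg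
  rw [Finset.sum_range_succ, Finset.sum_range_succ, Finset.sum_eq_zero, Finset.sum_eq_zero,
    hP.monic, hQ.monic] at h
  · simpa using h.symm
  · intro j hj
    rw [sub_zero, hQ.orth j (Finset.mem_range.1 hj), mul_zero]
  · intro j hj
    rw [add_zero, hP.orth j (Finset.mem_range.1 hj), mul_zero]

/-- The Szegő recursion `π_{n+1} = z π_n + π_{n+1}(0) z^n ψ_n(1/z)`. -/
lemma IsOP.szego {c : ℤ → ℂ} {n : ℕ} {P Q P1 : ℂ[X]} (hD : tdet c n ≠ 0) (hP : IsOP c n P)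
    (hQ : IsOP (dualMom c) n Q) (hP1 : IsOP c (n + 1) P1) :
    P1 = X * P + C (P1.coeff 0) * Q.reflect n := by
  set S := Q.reflect n with hS
  have hSc : ∀ j, n < j → S.coeff j = 0 := fun j hj => by
    rw [hS, coeff_reflect, revAt_eq_self_of_lt hj]; exact hQ.deg j hj
  have hS0 : S.coeff 0 = 1 := by
    rw [hS, coeff_reflect, revAt_le (Nat.zero_le _), Nat.sub_zero, hQ.monic]
  set W := P1 - X * P - C (P1.coeff 0) * S with hW
  -- `W` vanishes at `0`, so `W = X * V` with `V` of degree `< n` and vanishing moments.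
  have hW0 : W.coeff 0 = 0 := by simp [hW, hS0]
  have hV : X * divX W = W := by
    have := X_mul_divX_add W
    rwa [hW0, C_0, add_zero] at this
  have hz : divX W = 0 := by
    refine eq_zero_of_mom hD (fun j hj => ?_) fun i hi => ?_
    · rw [coeff_divX, hW, coeff_sub, coeff_sub, coeff_X_mul, coeff_C_mul, hSc _ (by omega)]
      rcases hj.eq_or_lt with rfl | hj
      · rw [hP1.monic, hP.monic]; ring
      · rw [hP1.deg _ (by omega), hP.deg _ hj]; ring
    · have e : mom c i (divX W) = mom c ((i + 1 : ℕ) : ℤ) W := by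
        conv_rhs => rw [← hV]
        rw [mom_X_mul, show ((i + 1 : ℕ) : ℤ) - 1 = i by push_cast; ring]
      rw [e, hW, map_sub, map_sub, hP1.orth _ (by omega), mom_X_mul, C_mul', map_smul, hS,
        mom_reflect c _ hQ.deg]
      rw [show (((i + 1 : ℕ) : ℤ) - 1) = (i : ℤ) by push_cast; ring, hP.orth i hi,
        show ((n : ℤ) - ((i + 1 : ℕ) : ℤ)) = ((n - (i + 1) : ℕ) : ℤ) by omega,
        hQ.orth _ (by omega)]
      simp
  have : W = 0 := by rw [← hV, hz, mul_zero]
  rw [hW] at this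
  linear_combination this

lemma IsOP.mom_reflect_zero {c : ℤ → ℂ} {n : ℕ} {P Q : ℂ[X]} (hP : IsOP c n P)
    (hQ : IsOP (dualMom c) n Q) {i : ℕ} (hi : i ≤ n) :
    mom c i (Q.reflect n) = if i = 0 then mom c n P else 0 := by
  rw [mom_reflect c _ hQ.deg]
  split_ifs with h
  · subst h
    simpa using hP.norm_dual hQ
  · rw [show ((n : ℤ) - (i : ℤ)) = ((n - i : ℕ) : ℤ) by omega]
    exact hQ.orth _ (by omega)

lemma IsOP.mom_neg_one {c : ℤ → ℂ} {n : ℕ} {P Q P1 : ℂ[X]} (hD : tdet c n ≠ 0) (hP : IsOP c n P)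
    (hQ : IsOP (dualMom c) n Q) (hP1 : IsOP c (n + 1) P1) :
    mom c (-1) P = - (P1.coeff 0 * mom c n P) := by
  have h := hP1.orth 0 (Nat.succ_pos n)
  rw [hP.szego hD hQ hP1, map_add, mom_X_mul, C_mul', map_smul,
    hP.mom_reflect_zero hQ (Nat.zero_le n)] at h
  simp only [Nat.cast_zero, zero_sub, if_true, smul_eq_mul] at h
  linear_combination h

/-- The ratio of consecutive norms, `h_{n+1} = h_n (1 - π_{n+1}(0) ψ_{n+1}(0))`. -/
lemma IsOP.norm_succ {c : ℤ → ℂ} {n : ℕ} {P Q P1 Q1 : ℂ[X]} (hD : tdet c n ≠ 0) (hP : IsOP c n P)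
    (hQ : IsOP (dualMom c) n Q) (hP1 : IsOP c (n + 1) P1) (hQ1 : IsOP (dualMom c) (n + 1) Q1) :
    mom c ((n : ℤ) + 1) P1 = mom c n P * (1 - P1.coeff 0 * Q1.coeff 0) := by
  have h2 := hQ.mom_neg_one ((tdet_dualMom c n).trans_ne hD) (by rwa [dualMom_dualMom]) hQ1
  rw [hP.norm_dual hQ] at h2
  have e := congrArg (mom c ((n : ℤ) + 1)) (hP.szego hD hQ hP1)
  rw [e, map_add, mom_X_mul, C_mul', map_smul, mom_reflect c _ hQ.deg,
    show (n : ℤ) + 1 - 1 = n by ring, show (n : ℤ) - (n + 1) = -1 by ring, h2, smul_eq_mul]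
  ring

/-- The relation `ν = x (π_{n+1}(0) ψ_n(0) - π_n(0) ψ_{n+1}(0))`, obtained by pairing
`z π_n' - n π_n` with `ψ_n`. -/
lemma IsOP.integral {c : ℤ → ℂ} {n : ℕ} {P Q P1 Q1 : ℂ[X]} {x ν : ℂ} (hD : tdet c n ≠ 0)
    (hD1 : tdet c (n + 1) ≠ 0) (hP : IsOP c n P)
    (hQ : IsOP (dualMom c) n Q) (hP1 : IsOP c (n + 1) P1) (hQ1 : IsOP (dualMom c) (n + 1) Q1)
    (hrec : ∀ k : ℤ, x * (c (k - 1) - c (k + 1)) = (k - ν) * c k) :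
    x * (P1.coeff 0 * Q.coeff 0 - P.coeff 0 * Q1.coeff 0) = ν := by
  have hh := hP.norm_ne_zero hD1
  -- `⟨z P, Q⟩`, for an arbitrary biorthogonal configuration so that it also applies to the dual.
  have key : ∀ {c : ℤ → ℂ} {P Q P1 : ℂ[X]}, tdet c n ≠ 0 → IsOP c n P → IsOP (dualMom c) n Q →
      IsOP c (n + 1) P1 → ∑ i ∈ Finset.range (n + 1), Q.coeff i * mom c ((i : ℤ) + (-1)) P =
        - (P1.coeff 0 * Q.coeff 0 * mom c n P) := by
    intro c P Q P1 hD hP hQ hP1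
    have e : ∀ i ∈ Finset.range (n + 1), Q.coeff i * mom c ((i : ℤ) + (-1)) P =
        if i = 0 then - (P1.coeff 0 * Q.coeff 0 * mom c n P) else 0 := by
      intro i hi
      have hi' := Finset.mem_range.1 hi
      have h := hP1.orth i hi'
      rw [hP.szego hD hQ hP1, map_add, mom_X_mul, C_mul', map_smul,
        hP.mom_reflect_zero hQ (by omega), smul_eq_mul] at h
      rw [← sub_eq_add_neg]
      split_ifs at h ⊢ with h0
      · subst h0
        linear_combination Q.coeff 0 * h
      · linear_combination Q.coeff i * h
    rw [Finset.sum_congr rfl e, Finset.sum_ite_eq']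
    simp
  have k1 := key hD hP hQ hP1
  have k2 := key ((tdet_dualMom c n).trans_ne hD) hQ (by rwa [dualMom_dualMom]) hQ1
  rw [hP.norm_dual hQ] at k2
  have k3 := pairing_symm c 1 (N := n + 1) (M := n + 1) hP.deg hQ.deg
  simp only [sub_eq_add_neg] at k3
  rw [k2] at k3
  set w := X * derivative P - C (n : ℂ) * P with hw
  have hwc : ∀ j, n ≤ j → w.coeff j = 0 := by
    intro j hj
    have e : (X * derivative P).coeff j = j * P.coeff j := by
      cases j with
      | zero => simp
      | succ j => rw [coeff_X_mul, coeff_derivative]; push_cast; ring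
    rw [hw, coeff_sub, e, coeff_C_mul]
    rcases hj.eq_or_lt with rfl | hj
    · ring
    · rw [hP.deg j hj]; ring
  have h0 : ∑ i ∈ Finset.range (n + 1), Q.coeff i * mom c ((i : ℤ) + 0) w = 0 := by
    rw [pairing_symm c 0 hwc hQ.deg]
    refine Finset.sum_eq_zero fun j hj => ?_
    rw [sub_zero, hQ.orth j (Finset.mem_range.1 hj), mul_zero]
  have h1 : ∀ i ∈ Finset.range (n + 1), Q.coeff i * mom c ((i : ℤ) + 0) w =
      (if i = n then - (ν * mom c n P) else 0) - x * (Q.coeff i * mom c ((i : ℤ) + (-1)) P)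
        + x * (Q.coeff i * mom c ((i : ℤ) + 1) P) := by
    intro i hi
    have hi' := Finset.mem_range.1 hi
    rw [hw, map_sub, mom_X_mul_derivative hrec, C_mul', map_smul, smul_eq_mul, add_zero,
      ← sub_eq_add_neg]
    split_ifs with h
    · subst h
      rw [hQ.monic]; push_cast; ring
    · rw [hP.orth i (by omega)]; ring
  rw [Finset.sum_congr rfl h1, Finset.sum_add_distrib, Finset.sum_sub_distrib,
    Finset.sum_ite_eq', ← Finset.mul_sum, ← Finset.mul_sum, k1, k3] at h0
  simp only [Finset.mem_range, Nat.lt_succ_self, if_true] at h0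
  refine mul_right_cancel₀ hh ?_
  linear_combination h0

lemma coeff_euler (P : ℂ[X]) (n j : ℕ) :
    (X * derivative P - C (n : ℂ) * P).coeff j = (j - n) * P.coeff j := by
  rw [coeff_sub, coeff_C_mul]
  cases j with
  | zero => simp
  | succ j => rw [coeff_X_mul, coeff_derivative]; push_cast; ring

/-- The flow `∂ₓ c_k = c_{k-1} + c_{k+1}` gives
`∂ₓ π_n(0) = 2 (1 - π_n(0) ψ_n(0)) π_{n+1}(0) + (n / x) π_n(0)`; here `R` stands for `∂ₓ π_n`. -/
lemma IsOP.flow_up {c : ℤ → ℂ} {n : ℕ} {P Q P1 R : ℂ[X]} {x ν : ℂ} (hx : x ≠ 0) (hD : tdet c n ≠ 0)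
    (hP : IsOP c n P) (hQ : IsOP (dualMom c) n Q)
    (hP1 : IsOP c (n + 1) P1) (hrec : ∀ k : ℤ, x * (c (k - 1) - c (k + 1)) = (k - ν) * c k)
    (hR : ∀ j, n ≤ j → R.coeff j = 0)
    (hRm : ∀ i : ℕ, i < n → mom c i R = - (mom c (i - 1) P + mom c (i + 1) P)) :
    R.coeff 0 = 2 * (1 - P.coeff 0 * Q.coeff 0) * P1.coeff 0 + n / x * P.coeff 0 := by
  have hz : C x * R + (X * derivative P - C (n : ℂ) * P)
      - C (2 * x * P1.coeff 0) * (Q.reflect n - C (Q.coeff 0) * P) = 0 := by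
    refine eq_zero_of_mom hD (fun j hj => ?_) fun i hi => ?_
    · rw [coeff_sub, coeff_add, coeff_euler, coeff_C_mul, coeff_C_mul, coeff_sub, coeff_C_mul,
        hR j hj, coeff_reflect]
      rcases hj.eq_or_lt with rfl | hj
      · rw [revAt_le le_rfl, Nat.sub_self, hP.monic]; ring
      · rw [hP.deg j hj, revAt_eq_self_of_lt hj, hQ.deg j hj]; ring
    · simp only [map_sub, map_add, C_mul', map_smul, smul_eq_mul]
      rw [hRm i hi, mom_X_mul_derivative hrec, hP.mom_reflect_zero hQ hi.le, hP.orth i hi]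
      split_ifs with h
      · subst h
        have := hP.mom_neg_one hD hQ hP1
        rw [Nat.cast_zero, zero_sub, this]
        ring
      · have := hP.orth (i - 1) (by omega)
        rw [show ((i - 1 : ℕ) : ℤ) = (i : ℤ) - 1 by omega] at this
        rw [this]; ring
  have h := congrArg (fun p => coeff p 0) hz
  simp only [coeff_sub, coeff_add, coeff_C_zero, coeff_zero, coeff_reflect,
    revAt_le (Nat.zero_le _), Nat.sub_zero, hQ.monic, mul_coeff_zero, coeff_X_zero] at h
  field_simp
  linear_combination h

/-- The companion of `IsOP.flow_up` at degree `n + 1`: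
`∂ₓ π_{n+1}(0) = -2 (1 - π_{n+1}(0) ψ_{n+1}(0)) π_n(0) - ((n + 1) / x) π_{n+1}(0)`. -/
lemma IsOP.flow_down {c : ℤ → ℂ} {n : ℕ} {P Q P1 Q1 R : ℂ[X]} {x ν : ℂ} (hx : x ≠ 0)
    (hD : tdet c n ≠ 0) (hD1 : tdet c (n + 1) ≠ 0)
    (hP : IsOP c n P) (hQ : IsOP (dualMom c) n Q)
    (hP1 : IsOP c (n + 1) P1) (hQ1 : IsOP (dualMom c) (n + 1) Q1)
    (hrec : ∀ k : ℤ, x * (c (k - 1) - c (k + 1)) = (k - ν) * c k)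
    (hR : ∀ j, n + 1 ≤ j → R.coeff j = 0)
    (hRm : ∀ i : ℕ, i < n + 1 → mom c i R = - (mom c (i - 1) P1 + mom c (i + 1) P1)) :
    R.coeff 0 = -2 * (1 - P1.coeff 0 * Q1.coeff 0) * P.coeff 0 - (n + 1) / x * P1.coeff 0 := by
  have hz : C x * R - (X * derivative P1 - C ((n + 1 : ℕ) : ℂ) * P1)
      + C (2 * x * (1 - P1.coeff 0 * Q1.coeff 0)) * P = 0 := by
    refine eq_zero_of_mom hD1 (fun j hj => ?_) fun i hi => ?_
    · rw [coeff_add, coeff_sub, coeff_euler, coeff_C_mul, coeff_C_mul, hR j hj, hP.deg j hj]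
      rcases hj.eq_or_lt with rfl | hj
      · push_cast; ring
      · rw [hP1.deg j hj]; ring
    · simp only [map_sub, map_add, C_mul', map_smul, smul_eq_mul]
      rw [hRm i hi, mom_X_mul_derivative hrec, hP1.orth i hi]
      rcases Nat.lt_succ_iff_lt_or_eq.1 hi with h | rfl
      · have := hP1.orth (i + 1) (by omega)
        push_cast at this
        rw [this, hP.orth i h]; ring
      · rw [hP.norm_succ hD hQ hP1 hQ1]; ring
  have h := congrArg (fun p => coeff p 0) hz
  simp only [coeff_sub, coeff_add, coeff_C_zero, coeff_zero, mul_coeff_zero, coeff_X_zero] at h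
  push_cast at h
  field_simp
  linear_combination h

end Algebra

/-! ### Existence, determinant formulas and dependence on the parameter -/

section Existence

open Polynomial

/-- The coefficients of the monic orthogonal polynomial of degree `n`; those of index `< n` solve the
Toeplitz system expressing orthogonality. Meaningful when `D_n ≠ 0`. -/
noncomputable def opCoeff (c : ℤ → ℂ) (n k : ℕ) : ℂ :=
  if h : k < n then
    ((Matrix.of fun i j : Fin n => c ((i : ℕ) - (j : ℕ)))⁻¹.mulVec
      fun i : Fin n => -c ((i : ℕ) - (n : ℤ))) ⟨k, h⟩
  else if k = n then 1 else 0

/-- The monic orthogonal polynomial `π_n` of the moment sequence `c`. -/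
noncomputable def opoly (c : ℤ → ℂ) (n : ℕ) : ℂ[X] :=
  ∑ k ∈ Finset.range (n + 1), monomial k (opCoeff c n k)

lemma coeff_opoly (c : ℤ → ℂ) (n k : ℕ) : (opoly c n).coeff k = opCoeff c n k := by
  simp only [opoly, finsetSum_coeff, coeff_monomial, Finset.sum_ite_eq', Finset.mem_range]
  split_ifs with h
  · rfl
  · rw [opCoeff, dif_neg (by omega), if_neg (by omega)]

lemma isOP_opoly {c : ℤ → ℂ} {n : ℕ} (hD : tdet c n ≠ 0) : IsOP c n (opoly c n) where
  monic := by rw [coeff_opoly, opCoeff, dif_neg (lt_irrefl n), if_pos rfl]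
  deg j hj := by rw [coeff_opoly, opCoeff, dif_neg (by omega), if_neg (by omega)]
  orth i hi := by
    have hu : IsUnit (Matrix.of fun i j : Fin n => c ((i : ℕ) - (j : ℕ))).det :=
      isUnit_iff_ne_zero.2 hD
    have h : (Matrix.of fun i j : Fin n => c ((i : ℕ) - (j : ℕ))).mulVec
        (fun j => opCoeff c n j) ⟨i, hi⟩ = -c (i - (n : ℤ)) := by
      have e : (fun j : Fin n => opCoeff c n j) =
          (Matrix.of fun i j : Fin n => c ((i : ℕ) - (j : ℕ)))⁻¹.mulVec
            fun i : Fin n => -c ((i : ℕ) - (n : ℤ)) := by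
        ext j
        rw [opCoeff, dif_pos j.2]
      rw [e, Matrix.mulVec_mulVec, Matrix.mul_nonsing_inv _ hu, Matrix.one_mulVec]
    rw [mom_eq_sum c i (N := n + 1) (fun j hj => by
      rw [coeff_opoly, opCoeff, dif_neg (by omega), if_neg (by omega)]), Finset.sum_range_succ,
      Finset.sum_range]
    simp only [coeff_opoly]
    rw [opCoeff, dif_neg (lt_irrefl n), if_pos rfl]
    simp only [Matrix.mulVec, dotProduct, Matrix.of_apply] at h
    rw [one_mul, ← eq_neg_iff_add_eq_zero, ← h]
    simp only [mul_comm]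

/-- Cramer's rule for the coefficients of `π_n`. -/
lemma opCoeff_eq_cramer {c : ℤ → ℂ} {n : ℕ} (hD : tdet c n ≠ 0) (k : Fin n) :
    opCoeff c n k = (tdet c n)⁻¹ *
      (Matrix.updateCol (Matrix.of fun i j : Fin n => c ((i : ℕ) - (j : ℕ))) k
        fun i : Fin n => -c ((i : ℕ) - (n : ℤ))).det := by
  have h := congrFun (Matrix.det_smul_inv_mulVec_eq_cramer
    (Matrix.of fun i j : Fin n => c ((i : ℕ) - (j : ℕ)))
    (fun i : Fin n => -c ((i : ℕ) - (n : ℤ))) (isUnit_iff_ne_zero.2 hD)) k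
  rw [Matrix.cramer_apply] at h
  rw [← h, opCoeff, dif_pos k.2, Pi.smul_apply, smul_eq_mul, tdet,
    inv_mul_cancel_left₀ (by exact hD)]

/-- `π_n(0) = (-1)^n det (c_{i-j-1}) / det (c_{i-j})`. -/
lemma opoly_coeff_zero {c : ℤ → ℂ} {n : ℕ} (hD : tdet c n ≠ 0) :
    (opoly c n).coeff 0 = (-1) ^ n *
      (Matrix.of fun i j : Fin n => c ((i : ℕ) - (j : ℕ) - 1)).det / tdet c n := by
  rw [coeff_opoly]
  cases n with
  | zero => simp [opCoeff, tdet]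
  | succ m =>
    have h := opCoeff_eq_cramer hD (0 : Fin (m + 1))
    rw [Fin.val_zero] at h
    set M := Matrix.of fun i j : Fin (m + 1) => c ((i : ℕ) - (j : ℕ) - 1) with hM
    -- Rotating the columns cyclically turns the Cramer matrix into `M` with its last column negated.
    have e : (Matrix.updateCol (Matrix.of fun i j : Fin (m + 1) => c ((i : ℕ) - (j : ℕ))) 0
        fun i : Fin (m + 1) => -c ((i : ℕ) - ((m + 1 : ℕ) : ℤ))).submatrix id (finRotate (m + 1)) =
        M.updateCol (Fin.last m) ((-1 : ℂ) • fun i => M i (Fin.last m)) := by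
      ext i j
      rw [Matrix.submatrix_apply, Matrix.updateCol_apply, Matrix.updateCol_apply]
      refine Fin.lastCases ?_ (fun j => ?_) j
      · rw [finRotate_last, if_pos rfl, if_pos rfl]
        simp only [hM, Pi.smul_apply, Matrix.of_apply, smul_eq_mul, Fin.val_last, id]
        rw [neg_one_mul]
        congr 2
        push_cast; ring
      · have hr : finRotate (m + 1) j.castSucc = j.succ := by
          ext
          rw [coe_finRotate_of_ne_last (Fin.castSucc_lt_last j).ne]
          simp
        rw [hr, if_neg (Fin.succ_ne_zero j), if_neg (Fin.castSucc_lt_last j).ne]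
        simp only [hM, Matrix.of_apply, id, Fin.val_succ, Fin.val_castSucc]
        congr 1
        push_cast; ring
    have hd := congrArg Matrix.det e
    rw [Matrix.det_permute', Matrix.det_updateCol_smul, Matrix.updateCol_eq_self,
      sign_finRotate] at hd
    rw [h, div_eq_inv_mul]
    congr 1
    simp only [Nat.add_sub_cancel] at hd
    rw [Units.val_pow_eq_pow_val, Units.val_neg, Units.val_one, Int.cast_pow, Int.cast_neg,
      Int.cast_one] at hd
    have hs : ((-1 : ℂ) ^ m) * (-1) ^ m = 1 := by rw [← mul_pow]; simp
    rw [pow_succ]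
    linear_combination ((-1 : ℂ) ^ m) * hd - hs * (Matrix.updateCol (Matrix.of
      fun i j : Fin (m + 1) => c ((i : ℕ) - (j : ℕ))) 0
        fun i : Fin (m + 1) => -c ((i : ℕ) - ((m + 1 : ℕ) : ℤ))).det

end Existence

section Flow

open Polynomial

lemma differentiableAt_det {n : ℕ} {A : ℝ → Matrix (Fin n) (Fin n) ℂ} {x : ℝ}
    (h : ∀ i j, DifferentiableAt ℝ (fun y => A y i j) x) :
    DifferentiableAt ℝ (fun y => (A y).det) x := by
  simp only [Matrix.det_apply']
  exact DifferentiableAt.fun_sum fun σ _ =>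
    (DifferentiableAt.fun_finsetProd fun i _ => h _ _).const_mul _

lemma differentiableAt_tdet {c : ℝ → ℤ → ℂ} {x : ℝ}
    (h : ∀ k, DifferentiableAt ℝ (fun y => c y k) x) (n : ℕ) :
    DifferentiableAt ℝ (fun y => tdet (c y) n) x :=
  differentiableAt_det fun _ _ => h _

lemma eventually_tdet_ne_zero {c : ℝ → ℤ → ℂ} {x : ℝ}
    (h : ∀ k, DifferentiableAt ℝ (fun y => c y k) x) {n : ℕ} (hD : tdet (c x) n ≠ 0) :
    ∀ᶠ y in nhds x, tdet (c y) n ≠ 0 :=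
  (differentiableAt_tdet h n).continuousAt.eventually_ne hD

lemma differentiableAt_opCoeff {c : ℝ → ℤ → ℂ} {x : ℝ}
    (h : ∀ k, DifferentiableAt ℝ (fun y => c y k) x) {n : ℕ} (hD : tdet (c x) n ≠ 0) (k : ℕ) :
    DifferentiableAt ℝ (fun y => opCoeff (c y) n k) x := by
  by_cases hk : k < n
  · have h1 : DifferentiableAt ℝ (fun y => (tdet (c y) n)⁻¹ *
      (Matrix.updateCol (Matrix.of fun i j : Fin n => c y ((i : ℕ) - (j : ℕ))) ⟨k, hk⟩
        fun i : Fin n => -c y ((i : ℕ) - (n : ℤ))).det) x := by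
      refine ((differentiableAt_tdet h n).inv hD).mul (differentiableAt_det fun i j => ?_)
      simp only [Matrix.updateCol_apply]
      split_ifs
      · exact (h _).neg
      · exact h _
    refine h1.congr_of_eventuallyEq ?_
    filter_upwards [eventually_tdet_ne_zero h hD] with y hy
    exact opCoeff_eq_cramer hy ⟨k, hk⟩
  · simp only [opCoeff, dif_neg hk]
    exact differentiableAt_const _

/-- The derivative of `π_n` along the flow `∂ₓ c_k = c_{k-1} + c_{k+1}` is a polynomial of degree
`< n`, whose first `n` moments come from differentiating the orthogonality relations. -/
lemma exists_deriv_opoly {c : ℝ → ℤ → ℂ} {x : ℝ}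
    (h : ∀ k, HasDerivAt (fun y => c y k) (c x (k - 1) + c x (k + 1)) x) {n : ℕ}
    (hD : tdet (c x) n ≠ 0) :
    ∃ R : ℂ[X], (∀ j, n ≤ j → R.coeff j = 0) ∧
      (∀ j, HasDerivAt (fun y => (opoly (c y) n).coeff j) (R.coeff j) x) ∧
      ∀ i : ℕ, i < n → mom (c x) i R =
        - (mom (c x) (i - 1) (opoly (c x) n) + mom (c x) (i + 1) (opoly (c x) n)) := by
  have hdiff : ∀ k, DifferentiableAt ℝ (fun y => c y k) x := fun k => (h k).differentiableAt
  set R : ℂ[X] := ∑ k ∈ Finset.range n, monomial k (deriv (fun y => opCoeff (c y) n k) x) with hR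
  have hRc : ∀ j, R.coeff j = deriv (fun y => opCoeff (c y) n j) x := by
    intro j
    simp only [hR, finsetSum_coeff, coeff_monomial, Finset.sum_ite_eq', Finset.mem_range]
    split_ifs with hj
    · rfl
    · simp only [opCoeff, dif_neg hj, deriv_const]
  have hRd : ∀ j, HasDerivAt (fun y => (opoly (c y) n).coeff j) (R.coeff j) x := by
    intro j
    simp only [coeff_opoly, hRc]
    exact (differentiableAt_opCoeff hdiff hD j).hasDerivAt
  have hR0 : ∀ j, n ≤ j → R.coeff j = 0 := fun j hj => by
    simp only [hRc, opCoeff, dif_neg (not_lt.2 hj), deriv_const]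
  refine ⟨R, hR0, hRd, fun i hi => ?_⟩
  have hP0 : ∀ y, ∀ j, n + 1 ≤ j → (opoly (c y) n).coeff j = 0 := fun y j hj => by
    rw [coeff_opoly, opCoeff, dif_neg (by omega), if_neg (by omega)]
  have hsum : HasDerivAt (fun y => mom (c y) i (opoly (c y) n))
      (∑ j ∈ Finset.range (n + 1), (R.coeff j * c x (i - j) +
        (opoly (c x) n).coeff j * (c x (i - j - 1) + c x (i - j + 1)))) x := by
    have : (fun y => mom (c y) i (opoly (c y) n)) =
        fun y => ∑ j ∈ Finset.range (n + 1), (opoly (c y) n).coeff j * c y (i - j) := by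
      ext y
      exact mom_eq_sum _ _ (hP0 y)
    rw [this]
    exact HasDerivAt.fun_sum fun j _ => (hRd j).mul (h _)
  have hzero : HasDerivAt (fun y => mom (c y) i (opoly (c y) n)) 0 x := by
    refine (hasDerivAt_const x (0 : ℂ)).congr_of_eventuallyEq ?_
    filter_upwards [eventually_tdet_ne_zero hdiff hD] with y hy
    exact (isOP_opoly hy).orth i hi
  have he := hsum.unique hzero
  rw [mom_eq_sum _ _ (N := n + 1) (fun j hj => hR0 j (by omega)), mom_eq_sum _ _ (hP0 x),
    mom_eq_sum _ _ (hP0 x), eq_neg_iff_add_eq_zero, ← Finset.sum_add_distrib,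
    ← Finset.sum_add_distrib, ← he]
  refine Finset.sum_congr rfl fun j _ => ?_
  rw [show (i : ℤ) - 1 - j = i - j - 1 by ring, show (i : ℤ) + 1 - j = i - j + 1 by ring]
  ring

end Flow

/-! ### Bessel functions: derivative and recurrence -/

section Bessel

/-- The entire function `F_μ(z) = ∑ z^k / (k! Γ(k+μ+1))`, so that
`I_μ(2x) = x^μ F_μ(x²)`. -/
noncomputable def besselF (μ z : ℂ) : ℂ :=
  ∑' k : ℕ, z ^ k * (((k.factorial : ℂ))⁻¹ * (Complex.Gamma ((k : ℂ) + μ + 1))⁻¹)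

lemma exists_bound_inv_Gamma (μ : ℂ) :
    ∃ B : ℝ, 0 ≤ B ∧ ∀ k : ℕ, ‖(Complex.Gamma ((k : ℂ) + μ + 1))⁻¹‖ ≤ B := by
  obtain ⟨N, hN⟩ := exists_nat_ge (1 + ‖μ + 1‖)
  -- Beyond `N` the factor `k + μ + 1` has modulus at least `1`, so the values decrease.
  have hstep : ∀ k : ℕ, N ≤ k → ‖(Complex.Gamma ((k : ℂ) + μ + 1))⁻¹‖ ≤
      ‖(Complex.Gamma ((N : ℂ) + μ + 1))⁻¹‖ := by
    intro k hk
    induction k, hk using Nat.le_induction with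
    | base => exact le_rfl
    | succ k hk ih =>
      refine le_trans ?_ ih
      rw [Complex.one_div_Gamma_eq_self_mul_one_div_Gamma_add_one ((k : ℂ) + μ + 1), norm_mul,
        show (k : ℂ) + μ + 1 + 1 = ((k + 1 : ℕ) : ℂ) + μ + 1 by push_cast; ring]
      refine le_mul_of_one_le_left (norm_nonneg _) ?_
      have h1 : ‖(k : ℂ)‖ ≤ ‖(k : ℂ) + μ + 1‖ + ‖μ + 1‖ := by
        have := norm_sub_le ((k : ℂ) + μ + 1) (μ + 1)
        rwa [show (k : ℂ) + μ + 1 - (μ + 1) = k by ring] at this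
      rw [Complex.norm_natCast] at h1
      have h2 : (N : ℝ) ≤ k := by exact_mod_cast hk
      linarith
  refine ⟨∑ k ∈ Finset.range (N + 1), ‖(Complex.Gamma ((k : ℂ) + μ + 1))⁻¹‖,
    Finset.sum_nonneg fun _ _ => norm_nonneg _, fun k => ?_⟩
  have hmem : ∀ j, j ≤ N → ‖(Complex.Gamma ((j : ℂ) + μ + 1))⁻¹‖ ≤
      ∑ k ∈ Finset.range (N + 1), ‖(Complex.Gamma ((k : ℂ) + μ + 1))⁻¹‖ := fun j hj =>
    Finset.single_le_sum (f := fun k : ℕ => ‖(Complex.Gamma ((k : ℂ) + μ + 1))⁻¹‖)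
      (fun _ _ => norm_nonneg _) (Finset.mem_range.2 (Nat.lt_succ_of_le hj))
  rcases le_total k N with h | h
  · exact hmem k h
  · exact (hstep k h).trans (hmem N le_rfl)

lemma summable_besselF (μ z : ℂ) : Summable fun k : ℕ =>
    z ^ k * (((k.factorial : ℂ))⁻¹ * (Complex.Gamma ((k : ℂ) + μ + 1))⁻¹) := by
  obtain ⟨B, hB0, hB⟩ := exists_bound_inv_Gamma μ
  refine Summable.of_norm_bounded ((Real.summable_pow_div_factorial ‖z‖).mul_right B) fun k => ?_
  rw [norm_mul, norm_mul, norm_pow, norm_inv, Complex.norm_natCast, ← mul_assoc,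
    ← div_eq_mul_inv]
  exact mul_le_mul_of_nonneg_left (hB k) (by positivity)

lemma hasDerivAt_besselF (μ z : ℂ) : HasDerivAt (besselF μ) (besselF (μ + 1) z) z := by
  obtain ⟨B, hB0, hB⟩ := exists_bound_inv_Gamma μ
  set r : ℝ := ‖z‖ + 1 with hr
  have hr0 : 0 ≤ r := by positivity
  have hsu : Summable fun k : ℕ => (k : ℝ) * r ^ (k - 1) / k.factorial * B := by
    refine Summable.mul_right B ((summable_nat_add_iff 1).1 ?_)
    refine (Real.summable_pow_div_factorial r).congr fun k => ?_
    rw [Nat.factorial_succ]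
    push_cast
    have : (k.factorial : ℝ) ≠ 0 := by positivity
    have : (k : ℝ) + 1 ≠ 0 := by positivity
    field_simp
  have key := hasDerivAt_tsum_of_isPreconnected (𝕜 := ℂ) (y₀ := z) (y := z) (t := Metric.ball 0 r)
    (g := fun (k : ℕ) (w : ℂ) =>
      w ^ k * (((k.factorial : ℂ))⁻¹ * (Complex.Gamma ((k : ℂ) + μ + 1))⁻¹))
    (g' := fun (k : ℕ) (w : ℂ) => ((k : ℂ) * w ^ (k - 1)) *
      (((k.factorial : ℂ))⁻¹ * (Complex.Gamma ((k : ℂ) + μ + 1))⁻¹))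
    hsu Metric.isOpen_ball (convex_ball 0 r).isPreconnected
    (fun k w _ => (hasDerivAt_pow k w).mul_const _) (fun k w hw => ?_)
    (by simp [hr]) (summable_besselF μ z) (by simp [hr])
  · convert! key using 1
    have hs : Summable fun k : ℕ => ((k : ℂ) * z ^ (k - 1)) *
        (((k.factorial : ℂ))⁻¹ * (Complex.Gamma ((k : ℂ) + μ + 1))⁻¹) := by
      refine (summable_nat_add_iff 1).1 ((summable_besselF (μ + 1) z).congr fun k => ?_)
      rw [Nat.factorial_succ]
      push_cast
      have : (k : ℂ) + 1 ≠ 0 := by exact_mod_cast k.succ_ne_zero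
      rw [show (k : ℂ) + (μ + 1) + 1 = k + 1 + μ + 1 by ring]
      field_simp
    rw [hs.tsum_eq_zero_add, besselF]
    simp only [Nat.cast_zero, zero_mul, zero_add]
    refine tsum_congr fun k => ?_
    rw [Nat.factorial_succ]
    push_cast
    have : (k : ℂ) + 1 ≠ 0 := by exact_mod_cast k.succ_ne_zero
    rw [show (k : ℂ) + (μ + 1) + 1 = k + 1 + μ + 1 by ring]
    field_simp
  · have hw' : ‖w‖ ≤ r := by simpa using (mem_ball_zero_iff.1 hw).le
    rw [norm_mul, norm_mul, norm_mul, norm_pow, norm_inv, Complex.norm_natCast,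
      Complex.norm_natCast, ← mul_assoc, ← div_eq_mul_inv]
    gcongr
    exact hB k

/-- The contiguity relation of `F`, from `1/Γ(s) = s/Γ(s+1)`. -/
lemma besselF_contig (μ z : ℂ) :
    besselF (μ - 1) z = μ * besselF μ z + z * besselF (μ + 1) z := by
  have hs : Summable fun k : ℕ => (k : ℂ) * (z ^ k *
      (((k.factorial : ℂ))⁻¹ * (Complex.Gamma ((k : ℂ) + μ + 1))⁻¹)) := by
    refine (summable_nat_add_iff 1).1 (((summable_besselF (μ + 1) z).mul_left z).congr fun k => ?_)
    rw [Nat.factorial_succ]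
    push_cast
    have : (k : ℂ) + 1 ≠ 0 := by exact_mod_cast k.succ_ne_zero
    rw [show (k : ℂ) + (μ + 1) + 1 = k + 1 + μ + 1 by ring, pow_succ]
    field_simp
  have h1 : z * besselF (μ + 1) z = ∑' k : ℕ, (k : ℂ) * (z ^ k *
      (((k.factorial : ℂ))⁻¹ * (Complex.Gamma ((k : ℂ) + μ + 1))⁻¹)) := by
    rw [hs.tsum_eq_zero_add, besselF, ← tsum_mul_left]
    simp only [Nat.cast_zero, zero_mul, zero_add]
    refine tsum_congr fun k => ?_
    rw [Nat.factorial_succ]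
    push_cast
    have : (k : ℂ) + 1 ≠ 0 := by exact_mod_cast k.succ_ne_zero
    rw [show (k : ℂ) + (μ + 1) + 1 = k + 1 + μ + 1 by ring, pow_succ]
    field_simp
  rw [h1, besselF, besselF, ← tsum_mul_left,
    ← ((summable_besselF μ z).mul_left μ).tsum_add hs]
  refine tsum_congr fun k => ?_
  rw [show (k : ℂ) + (μ - 1) + 1 = k + μ by ring,
    Complex.one_div_Gamma_eq_self_mul_one_div_Gamma_add_one ((k : ℂ) + μ)]
  ring

lemma besselI_eq (μ : ℂ) {x : ℝ} (hx : 0 < x) :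
    besselI μ (2 * x) = Complex.exp (μ * (Real.log x : ℂ)) * besselF μ ((x : ℂ) ^ 2) := by
  rw [besselI, besselF, ← tsum_mul_left]
  refine tsum_congr fun k => ?_
  rw [show 2 * x / 2 = x by ring, add_mul, Complex.exp_add, div_eq_mul_inv, mul_inv]
  have h : Complex.exp (2 * (k : ℂ) * (Real.log x : ℂ)) = ((x : ℂ) ^ 2) ^ k := by
    rw [show 2 * (k : ℂ) * (Real.log x : ℂ) = ((2 * k : ℕ) : ℂ) * (Real.log x : ℂ) by
      push_cast; ring, Complex.exp_nat_mul, ← Complex.ofReal_exp, Real.exp_log hx, pow_mul]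
  rw [h]
  ring

lemma exp_add_one_mul_log (μ : ℂ) {x : ℝ} (hx : 0 < x) :
    Complex.exp ((μ + 1) * (Real.log x : ℂ)) = x * Complex.exp (μ * (Real.log x : ℂ)) := by
  rw [add_mul, one_mul, Complex.exp_add, ← Complex.ofReal_exp, Real.exp_log hx, mul_comm]

/-- `I_{μ-1}(2x) - I_{μ+1}(2x) = (μ/x) I_μ(2x)`. -/
lemma besselI_rec (μ : ℂ) {x : ℝ} (hx : 0 < x) :
    (x : ℂ) * (besselI (μ - 1) (2 * x) - besselI (μ + 1) (2 * x)) = μ * besselI μ (2 * x) := by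
  have h := exp_add_one_mul_log (μ - 1) hx
  rw [sub_add_cancel] at h
  rw [besselI_eq _ hx, besselI_eq _ hx, besselI_eq _ hx, exp_add_one_mul_log μ hx,
    besselF_contig, h]
  ring

lemma hasDerivAt_besselI (μ : ℂ) {x : ℝ} (hx : 0 < x) :
    HasDerivAt (fun y : ℝ => besselI μ (2 * y))
      (besselI (μ - 1) (2 * x) + besselI (μ + 1) (2 * x)) x := by
  have hx' : (x : ℂ) ≠ 0 := by exact_mod_cast hx.ne'
  have h1 : HasDerivAt (fun y : ℝ => Complex.exp (μ * (Real.log y : ℂ)))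
      (Complex.exp (μ * (Real.log x : ℂ)) * (μ * ((x⁻¹ : ℝ) : ℂ))) x :=
    (((Real.hasDerivAt_log hx.ne').ofReal_comp).const_mul μ).cexp
  have h2 : HasDerivAt (fun y : ℝ => besselF μ ((y : ℂ) ^ 2))
      (besselF (μ + 1) ((x : ℂ) ^ 2) * (2 * x)) x := by
    have h3 : HasDerivAt (fun w : ℂ => w ^ 2) (2 * (x : ℂ)) (x : ℂ) := by
      simpa using hasDerivAt_pow 2 (x : ℂ)
    exact ((hasDerivAt_besselF μ _).comp (x : ℂ) h3).comp_ofReal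
  have h4 : HasDerivAt (fun y : ℝ => besselI μ (2 * y)) _ x := (h1.mul h2).congr_of_eventuallyEq (by
    filter_upwards [lt_mem_nhds hx] with y hy
    exact besselI_eq μ hy)
  convert! h4 using 1
  have hrec : besselI (μ - 1) (2 * x) =
      besselI (μ + 1) (2 * x) + μ * besselI μ (2 * x) / x := by
    rw [← besselI_rec μ hx]
    field_simp
    ring
  rw [hrec, besselI_eq _ hx, besselI_eq _ hx, exp_add_one_mul_log μ hx]
  push_cast
  field_simp
  ring

end Bessel

/-! ### The first-order system and Painlevé III -/

section Painleve

open Polynomial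

/-- The moments `c_k = I_{k-ν}(2x)`. -/
noncomputable def besselMom (ν : ℂ) (x : ℝ) (k : ℤ) : ℂ := besselI ((k : ℂ) - ν) (2 * x)

lemma besselMom_rec (ν : ℂ) {x : ℝ} (hx : 0 < x) (k : ℤ) :
    (x : ℂ) * (besselMom ν x (k - 1) - besselMom ν x (k + 1)) = (k - ν) * besselMom ν x k := by
  have h := besselI_rec ((k : ℂ) - ν) hx
  simp only [besselMom]
  rw [← h]
  congr 3 <;> · push_cast; ring

lemma hasDerivAt_besselMom (ν : ℂ) {x : ℝ} (hx : 0 < x) (k : ℤ) :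
    HasDerivAt (fun y => besselMom ν y k)
      (besselMom ν x (k - 1) + besselMom ν x (k + 1)) x := by
  have h := hasDerivAt_besselI ((k : ℂ) - ν) hx
  simp only [besselMom]
  convert! h using 3 <;> · push_cast; ring

lemma toeplitzD_eq (n : ℕ) (ν : ℂ) (x : ℝ) : toeplitzD n ν (2 * x) = tdet (besselMom ν x) n := by
  simp [toeplitzD, tdet, besselMom]

lemma toeplitzD1_eq (n : ℕ) (ν : ℂ) (x : ℝ) : toeplitzD1 n ν (2 * x) =
    (Matrix.of fun i j : Fin n => besselMom ν x ((i : ℕ) - (j : ℕ) - 1)).det := by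
  simp [toeplitzD1, besselMom]

/-- The system satisfied by `A = -π_{n+1}(0) / π_n(0)` and `U = 1 - π_n(0) ψ_n(0)`. -/
lemma ratio_system (n : ℕ) (ν : ℂ) {x : ℝ} (hx : 0 < x)
    (hD : tdet (besselMom ν x) n ≠ 0) (hD1 : tdet (besselMom ν x) (n + 1) ≠ 0)
    {A U : ℝ → ℂ}
    (hA : A = fun y => -(opoly (besselMom ν y) (n + 1)).coeff 0 / (opoly (besselMom ν y) n).coeff 0)
    (hU : U = fun y => 1 - (opoly (besselMom ν y) n).coeff 0 *
      (opoly (dualMom (besselMom ν y)) n).coeff 0)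
    (hα : (opoly (besselMom ν x) n).coeff 0 ≠ 0) :
    HasDerivAt A (2 - 2 * A x ^ 2 + 4 * U x * A x ^ 2 - (2 * n + 1 + 2 * ν) * A x / x) x ∧
    HasDerivAt U (2 * U x * (2 * A x * (1 - U x) + ν / x) - 2 * n * (1 - U x) / x) x := by
  have hx' : (x : ℂ) ≠ 0 := by exact_mod_cast hx.ne'
  have hc := hasDerivAt_besselMom ν hx
  have hrec := besselMom_rec ν hx
  have hdc : ∀ k, HasDerivAt (fun y => dualMom (besselMom ν y) k)
      (dualMom (besselMom ν x) (k - 1) + dualMom (besselMom ν x) (k + 1)) x := by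
    intro k
    simp only [dualMom]
    convert! hc (-k) using 1
    rw [show -(k - 1) = -k + 1 by ring, show -(k + 1) = -k - 1 by ring, add_comm]
  have hdrec : ∀ k : ℤ, (x : ℂ) * (dualMom (besselMom ν x) (k - 1) -
      dualMom (besselMom ν x) (k + 1)) = (k - -ν) * dualMom (besselMom ν x) k := by
    intro k
    have h := hrec (-k)
    simp only [dualMom]
    rw [show -(k - 1) = -k + 1 by ring, show -(k + 1) = -k - 1 by ring]
    push_cast at h
    linear_combination -h
  have hDd := (tdet_dualMom (besselMom ν x) n).trans_ne hD
  have hDd1 := (tdet_dualMom (besselMom ν x) (n + 1)).trans_ne hD1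
  have hP := isOP_opoly hD
  have hP1 := isOP_opoly hD1
  have hQ := isOP_opoly hDd
  have hQ1 := isOP_opoly hDd1
  obtain ⟨R, hR0, hRd, hRm⟩ := exists_deriv_opoly hc hD
  obtain ⟨R1, hR10, hR1d, hR1m⟩ := exists_deriv_opoly hc hD1
  obtain ⟨S, hS0, hSd, hSm⟩ := exists_deriv_opoly hdc hDd
  have e1 := hP.flow_up hx' hD hQ hP1 hrec hR0 hRm
  have e2 := hP.flow_down hx' hD hD1 hQ hP1 hQ1 hrec hR10 (by exact_mod_cast hR1m)
  have e3 := hQ.flow_up hx' hDd (by rwa [dualMom_dualMom]) hQ1 hdrec hS0 hSm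
  have e4 := hP.integral hD hD1 hQ hP1 hQ1 hrec
  have dα := hRd 0
  have dα1 := hR1d 0
  have dβ := hSd 0
  rw [e1] at dα
  rw [e2] at dα1
  rw [e3] at dβ
  have dA := (dα1.fun_neg.fun_div dα hα).congr_of_eventuallyEq (Filter.EventuallyEq.of_eq hA)
  have dU := ((dα.fun_mul dβ).const_sub 1).congr_of_eventuallyEq (Filter.EventuallyEq.of_eq hU)
  have hAx : A x = -(opoly (besselMom ν x) (n + 1)).coeff 0 / (opoly (besselMom ν x) n).coeff 0 := by
    rw [hA]
  have hUx : U x = 1 - (opoly (besselMom ν x) n).coeff 0 *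
      (opoly (dualMom (besselMom ν x)) n).coeff 0 := by
    rw [hU]
  clear hA hU
  generalize (opoly (besselMom ν x) n).coeff 0 = α at *
  generalize (opoly (besselMom ν x) (n + 1)).coeff 0 = α1 at *
  generalize (opoly (dualMom (besselMom ν x)) n).coeff 0 = β at *
  generalize (opoly (dualMom (besselMom ν x)) (n + 1)).coeff 0 = β1 at *
  have hν : ν = x * (α1 * β - α * β1) := e4.symm
  constructor
  · convert! dA using 1
    rw [hAx, hUx, hν]
    field_simp
    ring
  · convert! dU using 1
    rw [hAx, hUx, hν]
    field_simp
    ring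

end Painleve

/-- the ratio `a(x) = D'¹_{n+1,ν}(2x) D_{n,ν}(2x) / (D_{n+1,ν}(2x) D'¹_{n,ν}(2x))`
of Toeplitz determinants (equal to `-π_{n+1}(0)/π_n(0)` at `t = 2x`) is twice differentiable,
nonvanishing, and satisfies the Painlevé III equation
`a'' = a'²/a - a'/x + (4/x)((ν-n)a² + n + ν + 1) + 4a³ - 4/a` on `J`. -/
theorem ratio_satisfies_painleveIII (n : ℕ) (ν : ℂ) (J : Set ℝ)
    (hJopen : IsOpen J) (hJconn : J.OrdConnected) (hJpos : J ⊆ Set.Ioi (0 : ℝ))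
    (hne : ∀ x ∈ J, toeplitzD n ν (2 * x) ≠ 0 ∧ toeplitzD (n + 1) ν (2 * x) ≠ 0 ∧
      toeplitzD1 n ν (2 * x) ≠ 0 ∧ toeplitzD1 (n + 1) ν (2 * x) ≠ 0)
    (a : ℝ → ℂ)
    (ha : ∀ x ∈ J, a x = toeplitzD1 (n + 1) ν (2 * x) * toeplitzD n ν (2 * x) /
      (toeplitzD (n + 1) ν (2 * x) * toeplitzD1 n ν (2 * x))) :
    ∀ x ∈ J, DifferentiableAt ℝ a x ∧ DifferentiableAt ℝ (deriv a) x ∧ a x ≠ 0 ∧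
      deriv (deriv a) x = (deriv a x) ^ 2 / a x - deriv a x / (x : ℂ) +
        (4 / (x : ℂ)) * ((ν - (n : ℂ)) * a x ^ 2 + (n : ℂ) + ν + 1) +
        4 * a x ^ 3 - 4 / a x := by
  set A : ℝ → ℂ := fun y => -(opoly (besselMom ν y) (n + 1)).coeff 0 /
    (opoly (besselMom ν y) n).coeff 0 with hA
  set U : ℝ → ℂ := fun y => 1 - (opoly (besselMom ν y) n).coeff 0 *
    (opoly (dualMom (besselMom ν y)) n).coeff 0 with hU
  have hα : ∀ m, ∀ x : ℝ, toeplitzD m ν (2 * x) ≠ 0 →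
      (opoly (besselMom ν x) m).coeff 0 =
        (-1) ^ m * toeplitzD1 m ν (2 * x) / toeplitzD m ν (2 * x) := by
    intro m x h
    rw [toeplitzD_eq] at h ⊢
    rw [opoly_coeff_zero h, toeplitzD1_eq]
  have hα0 : ∀ m, ∀ x : ℝ, toeplitzD m ν (2 * x) ≠ 0 → toeplitzD1 m ν (2 * x) ≠ 0 →
      (opoly (besselMom ν x) m).coeff 0 ≠ 0 := by
    intro m x h h1
    rw [hα m x h]
    exact div_ne_zero (mul_ne_zero (pow_ne_zero _ (by norm_num)) h1) h
  have haA : ∀ x ∈ J, a x = A x := by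
    intro x hx
    obtain ⟨h1, h2, h3, h4⟩ := hne x hx
    have hs : ((-1 : ℂ) ^ n) ≠ 0 := pow_ne_zero _ (by norm_num)
    simp only [hA]
    rw [ha x hx, hα n x h1, hα (n + 1) x h2, pow_succ]
    field_simp
  have hsys : ∀ x ∈ J, HasDerivAt A
      (2 - 2 * A x ^ 2 + 4 * U x * A x ^ 2 - (2 * n + 1 + 2 * ν) * A x / x) x ∧
      HasDerivAt U (2 * U x * (2 * A x * (1 - U x) + ν / x) - 2 * n * (1 - U x) / x) x := by
    intro x hx
    obtain ⟨h1, h2, h3, h4⟩ := hne x hx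
    exact ratio_system n ν (hJpos hx) (by rwa [← toeplitzD_eq]) (by rwa [← toeplitzD_eq]) hA hU
      (hα0 n x h1 h3)
  have hd : ∀ x ∈ J, HasDerivAt a
      (2 - 2 * A x ^ 2 + 4 * U x * A x ^ 2 - (2 * n + 1 + 2 * ν) * A x / x) x := by
    intro x hx
    refine (hsys x hx).1.congr_of_eventuallyEq ?_
    filter_upwards [hJopen.mem_nhds hx] with y hy using haA y hy
  intro x hx
  have hx' : (x : ℂ) ≠ 0 := by exact_mod_cast (hJpos hx).ne'
  have hax : a x ≠ 0 := by
    obtain ⟨h1, h2, h3, h4⟩ := hne x hx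
    rw [ha x hx]
    exact div_ne_zero (mul_ne_zero h4 h1) (mul_ne_zero h2 h3)
  obtain ⟨dA, dU⟩ := hsys x hx
  have dx : HasDerivAt (fun y : ℝ => (y : ℂ)) 1 x := by
    simpa using (hasDerivAt_id x).ofReal_comp
  have hdd := (((dA.fun_pow 2).const_mul 2).const_sub 2).fun_add
    ((dU.const_mul 4).fun_mul (dA.fun_pow 2)) |>.fun_sub
    ((dA.const_mul (2 * n + 1 + 2 * ν : ℂ)).fun_div dx hx')
  have hdd' := hdd.congr_of_eventuallyEq (f₁ := deriv a) (by
    filter_upwards [hJopen.mem_nhds hx] with y hy using (hd y hy).deriv)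
  refine ⟨(hd x hx).differentiableAt, hdd'.differentiableAt, hax, ?_⟩
  rw [hdd'.deriv, (hd x hx).deriv]
  rw [haA x hx] at hax ⊢
  field_simp
  push_cast
  ring
end

section
/- There exists a Hastings–McLeod solution u of the inhomogeneous Painlevé II equation with parameter 1/2 (the case ν = 0): u''(x) = 2u(x)³ + x·u(x) + 1/2, such that for some M > 0 and C > 0, |u(x) + sqrt(−x/2) − 1/(4x)| ≤ C·(−x)^{−5/2} for all x < −M, and whose Hamiltonian H satisfies the exponentially small bound |H(x)| ≤ C·(−x)^{1/2}·e^{−(2·sqrt(2)/3)·(−x)^{3/2}} for all x < −M. -/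
/-!
Writing `u = -q`, the equation becomes `q'' = f(x, q)` with `f(x, q) = 2 q³ + x q - 1/2`, and a
positive solution on the whole line is sought that stays close to the positive root `Q(x)` of
`f(x, Q) = 0`.  This root has `Q ~ 1/(2x)` at `+∞` and `Q ~ √(-x/2)` at `-∞`.

With `P = 1/(1 + 8 Q³) ∈ (0, 1)` one has `Q' = -2 Q² P` and `P' = 6 Q P² (1 - P)`, so for
`w = Q (1 + κ P² (1 - P))` both `w''` and `f(x, w)` are `Q³` times a polynomial in `P`.
This makes `w` a supersolution (`w'' ≤ f(x, w)`) for `κ = 12` and a subsolution for `κ = -2`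
(`bar_super`, `bar_sub`).  Both barriers differ from `Q` by `O(|x|^{-5/2})` at both ends, so a
solution trapped between them has the required asymptotics automatically.

A trapped solution comes from monotone iteration on `ℝ`.  With `a(x) = x² + 10` and `K = a² + a'`
the map `q ↦ K q - f(x, q)` is increasing between the barriers, and
`d²/dx² - K = (d/dx + a)(d/dx - a)` is inverted by two explicit positive integral operators, one
integrating from `-∞` and the other from `+∞`.  The iterates starting from the upper barrier decrease
and stay above the lower one; by dominated convergence the limit is a fixed point, hence a solution
(`exists_trapped_solution`).

For the Hamiltonian, `z = u' - u² - x/2` satisfies `z' = -2 u z = 2 q z`.  The lower barrier is at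
least `√(-x/2)` for `x < 0`, so `z · exp((2√2/3)(-x)^{3/2})` is nondecreasing in modulus there, which
gives the exponential decay of `z` (`exists_decay`) and of `H = z²/2 + z (u² + x/2)`.
-/

open scoped Classical in
/-- The sign `ε` in the `x → -∞` asymptotics of the Hastings–McLeod solution:
`ε = -1` if `ν ∈ ℕ = {0,1,2,...}` and `ε = +1` otherwise. -/
noncomputable def hmSign (ν : ℂ) : ℂ := if ∃ m : ℕ, ν = (m : ℂ) then -1 else 1

/-- `IsHMSolution ν U u` says that `u` is a Hastings–McLeod solution of the inhomogeneous
Painlevé II equation `u'' = 2u³ + xu + ν + 1/2` with parameter `ν + 1/2`: `u` is twice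
continuously differentiable on an open set `U ⊆ ℝ` whose complement is (closed and) discrete,
solves the equation on `U`, and has the prescribed asymptotic behaviour as `x → ±∞`. -/
def IsHMSolution (ν : ℂ) (U : Set ℝ) (u : ℝ → ℂ) : Prop :=
  IsOpen U ∧ DiscreteTopology ↥(Uᶜ) ∧ ContDiffOn ℝ 2 u U ∧
    (∀ x ∈ U, deriv (deriv u) x = 2 * u x ^ 3 + (x : ℂ) * u x + ν + 1 / 2) ∧
    ∃ M : ℝ, 0 < M ∧ ∃ C : ℝ, 0 < C ∧
      (Set.Ioi M ∪ Set.Iio (-M)) ⊆ U ∧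
      (∀ x : ℝ, M < x → ‖u x + (ν + 1 / 2) / (x : ℂ)‖ ≤ C * x ^ (-(5 : ℝ) / 2)) ∧
      (∀ x : ℝ, x < -M →
        ‖u x - hmSign ν * (Real.sqrt (-x / 2) : ℂ) - (ν + 1 / 2) / (2 * (x : ℂ))‖ ≤
          C * (-x) ^ (-(5 : ℝ) / 2))

/-- The Hamiltonian `H(x) = (1/2)z(z+x) + z·u² - ν·u` associated with a solution `u`
of the inhomogeneous Painlevé II equation, where `z(x) = u'(x) - u(x)² - x/2`. -/
noncomputable def hmHamiltonian (ν : ℂ) (u : ℝ → ℂ) (x : ℝ) : ℂ :=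
  (1 / 2) * (deriv u x - u x ^ 2 - (x : ℂ) / 2) * ((deriv u x - u x ^ 2 - (x : ℂ) / 2) + (x : ℂ)) +
    (deriv u x - u x ^ 2 - (x : ℂ) / 2) * u x ^ 2 - ν * u x

open Filter Topology Set MeasureTheory

/-! ### The equilibrium branch and the barriers -/

theorem exists_equilibrium (x : ℝ) : ∃ q : ℝ, 0 < q ∧ 2 * q ^ 3 + x * q = 1 / 2 := by
  have hc : ContinuousOn (fun q : ℝ => 2 * q ^ 3 + x * q) (Icc 0 (1 + |x|)) := by fun_prop
  have h1 : (1 / 2 : ℝ) ∈ Icc (2 * (0 : ℝ) ^ 3 + x * 0) (2 * (1 + |x|) ^ 3 + x * (1 + |x|)) := by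
    constructor
    · norm_num
    · have := neg_abs_le x
      have h0 := abs_nonneg x
      nlinarith [mul_nonneg h0 h0, mul_nonneg (mul_nonneg h0 h0) h0]
  obtain ⟨q, hq, h⟩ := intermediate_value_Icc (by positivity) hc h1
  refine ⟨q, lt_of_le_of_ne hq.1 ?_, h⟩
  rintro rfl
  norm_num at h

/-- The positive root `q` of `2 q³ + x q = 1/2`. -/
noncomputable def eqQ (x : ℝ) : ℝ := (exists_equilibrium x).choose

theorem eqQ_pos (x : ℝ) : 0 < eqQ x := (exists_equilibrium x).choose_spec.1

theorem eqQ_spec (x : ℝ) : 2 * eqQ x ^ 3 + x * eqQ x = 1 / 2 := (exists_equilibrium x).choose_spec.2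

theorem eqQ_inv (x : ℝ) : 1 / (2 * eqQ x) - 2 * eqQ x ^ 2 = x := by
  have h := eqQ_spec x
  have h0 := eqQ_pos x
  field_simp
  linarith

theorem eqQ_continuousAt (x : ℝ) : ContinuousAt eqQ x := by
  have h0 := eqQ_pos x
  rw [ContinuousAt, tendsto_iff_dist_tendsto_zero]
  have hb : ∀ y, dist (eqQ y) (eqQ x) ≤ |x - y| / (2 * eqQ x) := by
    intro y
    have h1 := eqQ_pos y
    have hx := eqQ_spec x
    have hy := eqQ_spec y
    have h2 : 0 < 2 * eqQ x ^ 2 + x := by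
      have := eqQ_inv x
      have h3 : 0 < 1 / (2 * eqQ x) := by positivity
      linarith
    have hc : 2 * eqQ x * eqQ y ≤ 2 * (eqQ y ^ 2 + eqQ x * eqQ y + eqQ x ^ 2) + x := by nlinarith
    have he : (eqQ y - eqQ x) * (2 * (eqQ y ^ 2 + eqQ x * eqQ y + eqQ x ^ 2) + x)
        = (x - y) * eqQ y := by linear_combination hy - hx
    rw [Real.dist_eq, le_div_iff₀ (by positivity)]
    have he2 := congrArg abs he
    rw [abs_mul, abs_mul, abs_of_pos h1, abs_of_pos (lt_of_lt_of_le (by positivity) hc)] at he2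
    have h4 : |eqQ y - eqQ x| * (2 * eqQ x) * eqQ y ≤ |x - y| * eqQ y := by
      rw [← he2, mul_assoc]
      exact mul_le_mul_of_nonneg_left hc (abs_nonneg _)
    exact le_of_mul_le_mul_right h4 h1
  refine squeeze_zero (fun _ => dist_nonneg) hb ?_
  have : Tendsto (fun y => |x - y| / (2 * eqQ x)) (𝓝 x) (𝓝 (|x - x| / (2 * eqQ x))) := by
    apply Continuous.tendsto
    fun_prop
  simpa using this

/-- The auxiliary variable `1 / (1 + 8 Q³) ∈ (0, 1)`. -/
noncomputable def eqP (x : ℝ) : ℝ := (1 + 8 * eqQ x ^ 3)⁻¹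

theorem eqP_pos (x : ℝ) : 0 < eqP x := by
  have := eqQ_pos x
  unfold eqP; positivity

theorem eqP_spec (x : ℝ) : eqP x * (1 + 8 * eqQ x ^ 3) = 1 := by
  have := eqQ_pos x
  unfold eqP
  exact inv_mul_cancel₀ (by positivity)

theorem eqP_lt_one (x : ℝ) : eqP x < 1 := by
  have h1 := eqP_spec x
  have h2 := mul_pos (eqP_pos x) (pow_pos (eqQ_pos x) 3)
  linarith

theorem hasDerivAt_eqQ (x : ℝ) : HasDerivAt eqQ (-2 * eqQ x ^ 2 * eqP x) x := by
  have h0 := eqQ_pos x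
  have hf : HasDerivAt (fun q : ℝ => 1 / (2 * q) - 2 * q ^ 2)
      (-(2 / (2 * eqQ x) ^ 2) - 4 * eqQ x) (eqQ x) := by
    have h1 : HasDerivAt (fun q : ℝ => 2 * q) 2 (eqQ x) := by
      simpa using (hasDerivAt_id (eqQ x)).const_mul 2
    have h2 := (h1.fun_inv (by positivity)).fun_sub ((hasDerivAt_pow 2 (eqQ x)).const_mul 2)
    simp only [one_div]
    exact h2.congr_deriv (by push_cast; ring)
  have hne : -(2 / (2 * eqQ x) ^ 2) - 4 * eqQ x ≠ 0 := by
    have : 0 < 2 / (2 * eqQ x) ^ 2 := by positivity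
    apply ne_of_lt; linarith
  have := HasDerivAt.of_local_left_inverse (eqQ_continuousAt x) hf hne
    (Eventually.of_forall eqQ_inv)
  refine this.congr_deriv (inv_eq_of_mul_eq_one_right ?_)
  rw [eqP]
  field_simp
  ring

theorem hasDerivAt_eqP (x : ℝ) :
    HasDerivAt eqP (6 * eqQ x * eqP x ^ 2 * (1 - eqP x)) x := by
  have h0 := eqQ_pos x
  have hP := eqP_spec x
  have h1 := (((hasDerivAt_eqQ x).fun_pow 3).const_mul 8).const_add 1
  refine (h1.fun_inv (by positivity)).congr_deriv ?_
  have h3 : (1 + 8 * eqQ x ^ 3) = (eqP x)⁻¹ := by rw [eqP, inv_inv]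
  rw [h3]
  have hp := eqP_pos x
  field_simp
  push_cast
  linear_combination 6 * hP

/-- The family of barriers `Q (1 + κ P² (1 - P))`. -/
noncomputable def bar (κ x : ℝ) : ℝ := eqQ x * (1 + κ * eqP x ^ 2 * (1 - eqP x))

/-- First derivative of `bar κ`, as a function of `Q` and `P`. -/
noncomputable def bar' (κ x : ℝ) : ℝ :=
  eqQ x ^ 2 * (-2 * eqP x + κ * eqP x ^ 3 * (1 - eqP x) * (10 - 18 * eqP x))

/-- Second derivative of `bar κ`, as a function of `Q` and `P`. -/
noncomputable def bar'' (κ x : ℝ) : ℝ :=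
  eqQ x ^ 3 * (4 * eqP x ^ 2 * (3 * eqP x - 1)
    + κ * eqP x ^ 4 * (1 - eqP x) * (140 - 600 * eqP x + 540 * eqP x ^ 2))

theorem hasDerivAt_bar (κ x : ℝ) : HasDerivAt (bar κ) (bar' κ x) x := by
  have hQ := hasDerivAt_eqQ x
  have hP := hasDerivAt_eqP x
  refine (hQ.fun_mul ((((hP.fun_pow 2).const_mul κ).fun_mul
    (hP.const_sub 1)).const_add 1)).congr_deriv ?_
  simp only [bar']; push_cast; ring

theorem hasDerivAt_bar' (κ x : ℝ) : HasDerivAt (bar' κ) (bar'' κ x) x := by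
  have hQ := hasDerivAt_eqQ x
  have hP := hasDerivAt_eqP x
  refine ((hQ.fun_pow 2).fun_mul ((hP.const_mul (-2)).fun_add
    ((((hP.fun_pow 3).const_mul κ).fun_mul (hP.const_sub 1)).fun_mul
      ((hP.const_mul 18).const_sub 10)))).congr_deriv ?_
  simp only [bar'']; push_cast; ring

theorem force_bar (κ x : ℝ) : 2 * bar κ x ^ 3 + x * bar κ x - 1 / 2 =
    eqQ x ^ 3 * (κ * eqP x ^ 2 * (1 - eqP x) * (2 * (1 + κ * eqP x ^ 2 * (1 - eqP x)) *
      (2 + κ * eqP x ^ 2 * (1 - eqP x))) + 4 * κ * eqP x ^ 3) := by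
  have h1 := eqQ_spec x
  have h2 := eqP_spec x
  unfold bar
  linear_combination (1 + κ * eqP x ^ 2 * (1 - eqP x)) * h1
    - κ * eqP x ^ 2 / 2 * h2

/-- Terms of the Bernstein form of a polynomial on `[a, b]`; a polynomial all of whose Bernstein
coefficients are nonnegative is nonnegative there. -/
theorem bernstein_term_nonneg {a b p : ℝ} (ha : a ≤ p) (hb : p ≤ b) (i j : ℕ) :
    0 ≤ (p - a) ^ i * (b - p) ^ j :=
  mul_nonneg (pow_nonneg (sub_nonneg.2 ha) i) (pow_nonneg (sub_nonneg.2 hb) j)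

/-- The upper barrier is a supersolution. -/
theorem bar_super (x : ℝ) : bar'' 12 x ≤ 2 * bar 12 x ^ 3 + x * bar 12 x - 1 / 2 := by
  rw [force_bar, bar'']
  have hQ := eqQ_pos x
  have h0 := eqP_pos x
  have h1 := eqP_lt_one x
  generalize eqP x = p at *
  apply mul_le_mul_of_nonneg_left _ (by positivity)
  have h2 : 0 ≤ 12 * p ^ 2 * (1 - p) := by have := sub_pos.2 h1; positivity
  have h3 : 4 ≤ 2 * (1 + 12 * p ^ 2 * (1 - p)) * (2 + 12 * p ^ 2 * (1 - p)) := by nlinarith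
  have h4 := mul_le_mul_of_nonneg_left h3 h2
  have h5 : 0 ≤ p ^ 2 * (48 - 4 * (3 * p - 1)
      - 12 * p ^ 2 * (1 - p) * (140 - 600 * p + 540 * p ^ 2)) := by
    apply mul_nonneg (by positivity)
    -- The quintic has nonnegative Bernstein coefficients on each piece of the subdivision.
    have B (a b : ℝ) (ha : a ≤ p) (hb : p ≤ b) (i j : ℕ) := bernstein_term_nonneg ha hb i j
    rcases le_total p (1 / 2) with hb0 | hb0
    · linarith [B (0) (1 / 2) h0.le hb0 0 5, B (0) (1 / 2) h0.le hb0 1 4,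
        B (0) (1 / 2) h0.le hb0 2 3, B (0) (1 / 2) h0.le hb0 3 2,
        B (0) (1 / 2) h0.le hb0 4 1, B (0) (1 / 2) h0.le hb0 5 0]
    rcases le_total p (3 / 4) with hb1 | hb1
    · linarith [B (1 / 2) (3 / 4) hb0 hb1 0 5, B (1 / 2) (3 / 4) hb0 hb1 1 4,
        B (1 / 2) (3 / 4) hb0 hb1 2 3, B (1 / 2) (3 / 4) hb0 hb1 3 2,
        B (1 / 2) (3 / 4) hb0 hb1 4 1, B (1 / 2) (3 / 4) hb0 hb1 5 0]
    rcases le_total p (9 / 10) with hb2 | hb2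
    · linarith [B (3 / 4) (9 / 10) hb1 hb2 0 5, B (3 / 4) (9 / 10) hb1 hb2 1 4,
        B (3 / 4) (9 / 10) hb1 hb2 2 3, B (3 / 4) (9 / 10) hb1 hb2 3 2,
        B (3 / 4) (9 / 10) hb1 hb2 4 1, B (3 / 4) (9 / 10) hb1 hb2 5 0]
    linarith [B (9 / 10) (1) hb2 h1.le 0 5, B (9 / 10) (1) hb2 h1.le 1 4,
      B (9 / 10) (1) hb2 h1.le 2 3, B (9 / 10) (1) hb2 h1.le 3 2,
      B (9 / 10) (1) hb2 h1.le 4 1, B (9 / 10) (1) hb2 h1.le 5 0]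
  linarith

/-- The lower barrier is a subsolution. -/
theorem bar_sub (x : ℝ) : 2 * bar (-2) x ^ 3 + x * bar (-2) x - 1 / 2 ≤ bar'' (-2) x := by
  rw [force_bar, bar'']
  have hQ := eqQ_pos x
  have h0 := eqP_pos x
  have h1 := eqP_lt_one x
  generalize eqP x = p at *
  apply mul_le_mul_of_nonneg_left _ (by positivity)
  have h2 : p ^ 2 * (1 - p) ≤ 4 / 27 := by nlinarith [sq_nonneg (3 * p - 2)]
  have h3 : 2397 / 1000 ≤ 2 * (1 + -2 * p ^ 2 * (1 - p)) * (2 + -2 * p ^ 2 * (1 - p)) := by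
    nlinarith [sq_nonneg (4 / 27 - p ^ 2 * (1 - p))]
  have h2 : 0 ≤ 2 * p ^ 2 * (1 - p) := by have := sub_pos.2 h1; positivity
  have h4 := mul_le_mul_of_nonneg_left h3 h2
  have h5 : 0 ≤ p ^ 2 * (2397 / 500 * (1 - p) + 8 * p + 4 * (3 * p - 1)
      - 2 * p ^ 2 * (1 - p) * (140 - 600 * p + 540 * p ^ 2)) := by
    apply mul_nonneg (by positivity)
    -- The quintic has nonnegative Bernstein coefficients on each piece of the subdivision.
    have B (a b : ℝ) (ha : a ≤ p) (hb : p ≤ b) (i j : ℕ) := bernstein_term_nonneg ha hb i j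
    rcases le_total p (1 / 4) with hb0 | hb0
    · linarith [B (0) (1 / 4) h0.le hb0 0 5, B (0) (1 / 4) h0.le hb0 1 4,
        B (0) (1 / 4) h0.le hb0 2 3, B (0) (1 / 4) h0.le hb0 3 2,
        B (0) (1 / 4) h0.le hb0 4 1, B (0) (1 / 4) h0.le hb0 5 0]
    rcases le_total p (1 / 2) with hb1 | hb1
    · linarith [B (1 / 4) (1 / 2) hb0 hb1 0 5, B (1 / 4) (1 / 2) hb0 hb1 1 4,
        B (1 / 4) (1 / 2) hb0 hb1 2 3, B (1 / 4) (1 / 2) hb0 hb1 3 2,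
        B (1 / 4) (1 / 2) hb0 hb1 4 1, B (1 / 4) (1 / 2) hb0 hb1 5 0]
    rcases le_total p (3 / 4) with hb2 | hb2
    · linarith [B (1 / 2) (3 / 4) hb1 hb2 0 5, B (1 / 2) (3 / 4) hb1 hb2 1 4,
        B (1 / 2) (3 / 4) hb1 hb2 2 3, B (1 / 2) (3 / 4) hb1 hb2 3 2,
        B (1 / 2) (3 / 4) hb1 hb2 4 1, B (1 / 2) (3 / 4) hb1 hb2 5 0]
    linarith [B (3 / 4) (1) hb2 h1.le 0 5, B (3 / 4) (1) hb2 h1.le 1 4,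
      B (3 / 4) (1) hb2 h1.le 2 3, B (3 / 4) (1) hb2 h1.le 3 2,
      B (3 / 4) (1) hb2 h1.le 4 1, B (3 / 4) (1) hb2 h1.le 5 0]
  linarith

theorem eqQ_sq_le (x : ℝ) : eqQ x ^ 2 ≤ 1 + |x| / 2 := by
  have h0 := eqQ_pos x
  have h := eqQ_spec x
  have h1 := neg_abs_le x
  by_contra! hc
  have h2 := abs_nonneg x
  have h3 : 1 < eqQ x := by nlinarith
  nlinarith

theorem weight_nonneg_le (x : ℝ) :
    0 ≤ eqP x ^ 2 * (1 - eqP x) ∧ eqP x ^ 2 * (1 - eqP x) ≤ 4 / 27 := by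
  have h0 := eqP_pos x
  have h1 := eqP_lt_one x
  constructor
  · have := sub_pos.2 h1; positivity
  · nlinarith [sq_nonneg (3 * eqP x - 2)]

theorem bar_lower_pos (x : ℝ) : 0 < bar (-2) x := by
  have h := weight_nonneg_le x
  exact mul_pos (eqQ_pos x) (by linarith)

theorem bar_lower_le_upper (x : ℝ) : bar (-2) x ≤ bar 12 x := by
  have h := weight_nonneg_le x
  exact mul_le_mul_of_nonneg_left (by linarith) (eqQ_pos x).le

theorem bar_upper_le (x : ℝ) : bar 12 x ≤ 3 * eqQ x := by
  have h := weight_nonneg_le x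
  rw [mul_comm 3]
  exact mul_le_mul_of_nonneg_left (by linarith) (eqQ_pos x).le

theorem abs_bar_le {κ : ℝ} (hκ : |κ| ≤ 12) (x : ℝ) : |bar κ x| ≤ 3 * eqQ x := by
  have h := weight_nonneg_le x
  have hk := abs_le.1 hκ
  have h0 := eqQ_pos x
  rw [bar, abs_mul, abs_of_pos h0, mul_comm 3]
  refine mul_le_mul_of_nonneg_left (abs_le.2 ⟨?_, ?_⟩) h0.le <;> nlinarith

theorem abs_bar'_le {κ : ℝ} (hκ : |κ| ≤ 12) (x : ℝ) : |bar' κ x| ≤ 122 * eqQ x ^ 2 := by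
  have h0 := eqP_pos x
  have h1 := eqP_lt_one x
  have hq : 0 ≤ eqQ x ^ 2 := by positivity
  rw [bar', abs_mul, abs_of_nonneg hq, mul_comm 122]
  refine mul_le_mul_of_nonneg_left ?_ hq
  refine (abs_add_le _ _).trans ?_
  have e1 : |-2 * eqP x| ≤ 2 := by rw [abs_le]; constructor <;> linarith
  have e2 : |κ * eqP x ^ 3 * (1 - eqP x) * (10 - 18 * eqP x)| ≤ 12 * 1 * 1 * 10 := by
    rw [abs_mul, abs_mul, abs_mul]
    gcongr
    · rw [abs_of_pos (by positivity)]; exact pow_le_one₀ h0.le h1.le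
    · rw [abs_le]; constructor <;> linarith
    · rw [abs_le]; constructor <;> linarith
  linarith

/-! ### The factorized linear operator and the nonlinearity -/

/-- The drift `x² + 10` in the factorization
`d²/dx² - K = (d/dx + drift) (d/dx - drift)`, `K = drift² + drift'`. -/
noncomputable def drift (x : ℝ) : ℝ := x ^ 2 + 10

/-- The primitive of `drift` vanishing at `0`. -/
noncomputable def phase (x : ℝ) : ℝ := x ^ 3 / 3 + 10 * x

theorem hasDerivAt_phase (x : ℝ) : HasDerivAt phase (drift x) x := by
  refine (((hasDerivAt_pow 3 x).div_const 3).fun_add ((hasDerivAt_id x).const_mul 10)).congr_deriv ?_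
  simp [drift]

theorem hasDerivAt_drift (x : ℝ) : HasDerivAt drift (2 * x) x := by
  refine ((hasDerivAt_pow 2 x).add_const 10).congr_deriv ?_
  simp

theorem continuous_phase : Continuous phase :=
  continuous_iff_continuousAt.2 fun x => (hasDerivAt_phase x).continuousAt

/-- The nonlinearity `K q - f(x, q)`, with `f(x, q) = 2 q³ + x q - 1/2`
and `K = drift² + drift'`. -/
noncomputable def src (x q : ℝ) : ℝ :=
  (drift x ^ 2 + 2 * x) * q - (2 * q ^ 3 + x * q - 1 / 2)

theorem continuous_src {q : ℝ → ℝ} (hq : Continuous q) : Continuous fun x => src x (q x) := by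
  unfold src drift; fun_prop

/-- `K` exceeds the `q`-derivative of `f` on `[0, 3 Q]`, hence `src` is monotone there. -/
theorem src_mono {x p q : ℝ} (hp : 0 ≤ p) (hpq : p ≤ q) (hq : q ≤ 3 * eqQ x) :
    src x p ≤ src x q := by
  have h1 := eqQ_sq_le x
  have h0 := eqQ_pos x
  have h2 : 54 * eqQ x ^ 2 + x ≤ drift x ^ 2 + 2 * x := by
    unfold drift
    have h3 := neg_abs_le x
    have h4 : x ^ 2 = |x| ^ 2 := (sq_abs x).symm
    rw [h4]
    nlinarith [sq_nonneg (|x| - 1), sq_nonneg (|x| ^ 2)]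
  have h3 : p ^ 2 + p * q + q ^ 2 ≤ 27 * eqQ x ^ 2 := by nlinarith
  have h4 : src x q - src x p =
      (q - p) * (drift x ^ 2 + 2 * x - x - 2 * (p ^ 2 + p * q + q ^ 2)) := by
    unfold src; ring
  have h5 : 0 ≤ (q - p) * (drift x ^ 2 + 2 * x - x - 2 * (p ^ 2 + p * q + q ^ 2)) :=
    mul_nonneg (sub_nonneg.2 hpq) (by linarith)
  linarith

theorem src_nonneg {x q : ℝ} (hp : 0 ≤ q) (hq : q ≤ 3 * eqQ x) : 0 ≤ src x q := by
  have := src_mono le_rfl hp hq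
  have h : src x 0 = 1 / 2 := by simp [src]
  linarith

theorem hasDerivAt_exp_phase_mul {w w' w'' : ℝ → ℝ} (hw : ∀ x, HasDerivAt w (w' x) x)
    (hw' : ∀ x, HasDerivAt w' (w'' x) x) (x : ℝ) :
    HasDerivAt (fun x => Real.exp (phase x) * (drift x * w x - w' x))
      (Real.exp (phase x) * ((drift x ^ 2 + 2 * x) * w x - w'' x)) x := by
  refine ((hasDerivAt_phase x).exp.fun_mul
    (((hasDerivAt_drift x).fun_mul (hw x)).fun_sub (hw' x))).congr_deriv ?_
  ring

theorem hasDerivAt_exp_neg_phase_mul {w w' : ℝ → ℝ} (hw : ∀ x, HasDerivAt w (w' x) x) (x : ℝ) :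
    HasDerivAt (fun x => Real.exp (-phase x) * w x)
      (-(Real.exp (-phase x) * (drift x * w x - w' x))) x := by
  refine ((hasDerivAt_phase x).fun_neg.exp.fun_mul (hw x)).congr_deriv ?_
  ring

theorem tendsto_bar_atBot {κ : ℝ} (hκ : |κ| ≤ 12) :
    Tendsto (fun x => Real.exp (phase x) * (drift x * bar κ x - bar' κ x)) atBot (𝓝 0) := by
  have h1 : Tendsto (fun x : ℝ => 400 * ((-x) ^ 3 * Real.exp (-(-x)))) atBot (𝓝 0) := by
    have := ((Real.tendsto_pow_mul_exp_neg_atTop_nhds_zero 3).comp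
      tendsto_neg_atBot_atTop).const_mul 400
    simpa using this
  refine squeeze_zero_norm' ?_ h1
  filter_upwards [eventually_le_atBot (-1 : ℝ)] with x hx
  have hQ := eqQ_sq_le x
  have h0 := eqQ_pos x
  rw [abs_of_neg (by linarith)] at hQ
  have hb := abs_bar_le hκ x
  have hb' := abs_bar'_le hκ x
  have hQ2 : eqQ x ≤ 2 * -x := by nlinarith
  have hd : 0 ≤ drift x ∧ drift x ≤ 11 * (-x) ^ 2 := by
    unfold drift; constructor <;> nlinarith
  have hF : |drift x * bar κ x - bar' κ x| ≤ 400 * (-x) ^ 3 := by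
    refine (abs_sub _ _).trans ?_
    rw [abs_mul, abs_of_nonneg hd.1]
    have e1 : drift x * |bar κ x| ≤ 11 * (-x) ^ 2 * (6 * -x) := by
      apply mul_le_mul hd.2 (by linarith) (abs_nonneg _) (by positivity)
    have e2 : -x ≤ (-x) ^ 3 := by
      have : (1 : ℝ) ≤ (-x) ^ 2 := by nlinarith
      nlinarith
    nlinarith
  have hA : Real.exp (phase x) ≤ Real.exp (-(-x)) := by
    apply Real.exp_le_exp.2
    unfold phase
    nlinarith [sq_nonneg x]
  rw [norm_mul, Real.norm_eq_abs, Real.norm_eq_abs, Real.abs_exp]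
  calc _ ≤ Real.exp (-(-x)) * (400 * (-x) ^ 3) := by gcongr
    _ = _ := by ring

theorem tendsto_bar_atTop {κ : ℝ} (hκ : |κ| ≤ 12) :
    Tendsto (fun x => Real.exp (-phase x) * bar κ x) atTop (𝓝 0) := by
  have h1 : Tendsto (fun x : ℝ => Real.exp (-x) * 3) atTop (𝓝 0) := by
    have := Real.tendsto_exp_neg_atTop_nhds_zero.mul_const 3
    simpa using this
  refine squeeze_zero_norm' ?_ h1
  filter_upwards [eventually_ge_atTop (1 : ℝ)] with x hx
  have h0 := eqQ_pos x
  have hs := eqQ_spec x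
  have hQ : eqQ x ≤ 1 := by nlinarith [pow_pos h0 3]
  have hb := abs_bar_le hκ x
  have hA : Real.exp (-phase x) ≤ Real.exp (-x) := by
    apply Real.exp_le_exp.2
    unfold phase
    nlinarith [pow_pos (by linarith : 0 < x) 3]
  rw [norm_mul, Real.norm_eq_abs, Real.norm_eq_abs, Real.abs_exp]
  exact mul_le_mul hA (by linarith) (abs_nonneg _) (Real.exp_pos _).le

/-! ### Comparison of improper integrals with functions vanishing at infinity -/

/-- A nonnegative function dominated by `φ'` is integrable up to `-∞`, with integral at most `φ`,
when `φ` vanishes at `-∞`. -/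
theorem integral_Iic_le {φ φ' g : ℝ → ℝ} (hφ : ∀ x, HasDerivAt φ (φ' x) x) (hg : Continuous g)
    (hg0 : ∀ x, 0 ≤ g x) (hle : ∀ x, g x ≤ φ' x) (hlim : Tendsto φ atBot (𝓝 0)) (x : ℝ) :
    IntegrableOn g (Iic x) ∧ ∫ t in Iic x, g t ≤ φ x := by
  have hcont : Continuous φ := continuous_iff_continuousAt.2 fun x => (hφ x).continuousAt
  have h1 : ∀ y ≤ x, ∫ t in y..x, g t ≤ φ x - φ y := fun y hy =>
    intervalIntegral.integral_le_sub_of_hasDeriv_right_of_le hy hcont.continuousOn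
      (fun t _ => (hφ t).hasDerivWithinAt) (hg.integrableOn_Icc) (fun t _ => hle t)
  have hint : IntegrableOn g (Iic x) := by
    refine integrableOn_Iic_of_intervalIntegral_norm_bounded (φ x + 1) x
      (a := fun y : ℝ => y) (l := atBot) (fun y => hg.integrableOn_Ioc) tendsto_id ?_
    filter_upwards [eventually_le_atBot x, hlim.eventually (lt_mem_nhds (neg_one_lt_zero))]
      with y hy hy2
    have := h1 y hy
    simp only [Real.norm_of_nonneg (hg0 _)]
    linarith
  refine ⟨hint, ?_⟩
  have h2 := intervalIntegral_tendsto_integral_Iic x hint tendsto_id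
  have h3 : Tendsto (fun y => φ x - φ y) atBot (𝓝 (φ x - 0)) := hlim.const_sub _
  rw [sub_zero] at h3
  exact le_of_tendsto_of_tendsto h2 h3 ((eventually_le_atBot x).mono fun y hy => h1 y hy)

theorem le_integral_Iic {φ φ' g : ℝ → ℝ} (hφ : ∀ x, HasDerivAt φ (φ' x) x) {x : ℝ}
    (hg : IntegrableOn g (Iic x)) (hle : ∀ x, φ' x ≤ g x) (hlim : Tendsto φ atBot (𝓝 0)) :
    φ x ≤ ∫ t in Iic x, g t := by
  have hcont : Continuous φ := continuous_iff_continuousAt.2 fun x => (hφ x).continuousAt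
  have h1 : ∀ y ≤ x, φ x - φ y ≤ ∫ t in y..x, g t := fun y hy =>
    intervalIntegral.sub_le_integral_of_hasDeriv_right_of_le hy hcont.continuousOn
      (fun t _ => (hφ t).hasDerivWithinAt) (hg.mono_set Icc_subset_Iic_self) (fun t _ => hle t)
  have h2 := intervalIntegral_tendsto_integral_Iic x hg tendsto_id
  have h3 : Tendsto (fun y => φ x - φ y) atBot (𝓝 (φ x - 0)) := hlim.const_sub _
  rw [sub_zero] at h3
  exact le_of_tendsto_of_tendsto h3 h2 ((eventually_le_atBot x).mono fun y hy => h1 y hy)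

theorem integral_Ioi_le {φ φ' g : ℝ → ℝ} (hφ : ∀ x, HasDerivAt φ (-φ' x) x) (hg : Continuous g)
    (hg0 : ∀ x, 0 ≤ g x) (hle : ∀ x, g x ≤ φ' x) (hlim : Tendsto φ atTop (𝓝 0)) (x : ℝ) :
    IntegrableOn g (Ioi x) ∧ ∫ t in Ioi x, g t ≤ φ x := by
  have h := integral_Iic_le (φ := fun y => φ (-y)) (φ' := fun y => φ' (-y))
    (g := fun y => g (-y))
    (fun y => ((hφ (-y)).scomp y (hasDerivAt_neg y)).congr_deriv (by simp)) (by fun_prop)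
    (fun y => hg0 _) (fun y => hle _) (hlim.comp tendsto_neg_atBot_atTop) (-x)
  rw [integral_comp_neg_Iic, neg_neg] at h
  refine ⟨?_, h.2⟩
  have h2 := h.1.comp_neg
  simpa [integrableOn_Ici_iff_integrableOn_Ioi] using h2

theorem le_integral_Ioi {φ φ' g : ℝ → ℝ} (hφ : ∀ x, HasDerivAt φ (-φ' x) x) {x : ℝ}
    (hg : IntegrableOn g (Ioi x)) (hle : ∀ x, φ' x ≤ g x) (hlim : Tendsto φ atTop (𝓝 0)) :
    φ x ≤ ∫ t in Ioi x, g t := by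
  have h := le_integral_Iic (φ := fun y => φ (-y)) (φ' := fun y => φ' (-y)) (x := -x)
    (g := fun y => g (-y))
    (fun y => ((hφ (-y)).scomp y (hasDerivAt_neg y)).congr_deriv (by simp))
    (by
      rw [← integrableOn_Ici_iff_integrableOn_Ioi] at hg
      simpa using hg.comp_neg)
    (fun y => hle _) (hlim.comp tendsto_neg_atBot_atTop)
  rw [integral_comp_neg_Iic] at h
  simpa using h

theorem integral_Iic_eq {h : ℝ → ℝ} (hi : ∀ x, IntegrableOn h (Iic x)) :
    (fun x => ∫ t in Iic x, h t) = fun x => (∫ t in Iic 0, h t) + ∫ t in (0 : ℝ)..x, h t := by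
  ext x
  rw [← intervalIntegral.integral_Iic_sub_Iic (hi 0) (hi x)]
  ring

theorem intervalIntegrable_of_Iic {h : ℝ → ℝ} (hi : ∀ x, IntegrableOn h (Iic x)) (a b : ℝ) :
    IntervalIntegrable h volume a b :=
  ((hi (max a b)).mono_set fun _ ht => ht.2).intervalIntegrable

theorem integral_Ioi_eq {h : ℝ → ℝ} (hi : ∀ x, IntegrableOn h (Ioi x)) :
    (fun x => ∫ t in Ioi x, h t) = fun x => (∫ t in Ioi 0, h t) - ∫ t in (0 : ℝ)..x, h t := by
  ext x
  rw [← intervalIntegral.integral_Ioi_sub_Ioi' (hi 0) (hi x)]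
  ring

/-! ### Monotone iteration -/

/-- Solution operator of `v' + drift v = g`, integrating from `-∞`. -/
noncomputable def opL (g : ℝ → ℝ) (x : ℝ) : ℝ :=
  Real.exp (-phase x) * ∫ t in Iic x, Real.exp (phase t) * g t

/-- Solution operator of `w' - drift w = -v`, integrating from `+∞`. -/
noncomputable def opR (v : ℝ → ℝ) (x : ℝ) : ℝ :=
  Real.exp (phase x) * ∫ t in Ioi x, Real.exp (-phase t) * v t

theorem continuous_opL {g : ℝ → ℝ}
    (hi : ∀ x, IntegrableOn (fun t => Real.exp (phase t) * g t) (Iic x)) :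
    Continuous (opL g) := by
  refine (Real.continuous_exp.comp continuous_phase.neg).mul ?_
  rw [integral_Iic_eq hi]
  exact continuous_const.add
    (intervalIntegral.continuous_primitive (intervalIntegrable_of_Iic hi) 0)

theorem hasDerivAt_opL {g : ℝ → ℝ} (hg : Continuous g)
    (hi : ∀ x, IntegrableOn (fun t => Real.exp (phase t) * g t) (Iic x)) (x : ℝ) :
    HasDerivAt (opL g) (-(drift x * opL g x) + g x) x := by
  have hc : Continuous fun t => Real.exp (phase t) * g t :=
    (Real.continuous_exp.comp continuous_phase).mul hg
  have h1 : HasDerivAt (fun x => ∫ t in Iic x, Real.exp (phase t) * g t)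
      (Real.exp (phase x) * g x) x := by
    rw [integral_Iic_eq hi]
    exact (intervalIntegral.integral_hasDerivAt_right (hc.intervalIntegrable _ _)
      (hc.stronglyMeasurableAtFilter _ _) hc.continuousAt).const_add _
  refine ((hasDerivAt_phase x).fun_neg.exp.fun_mul h1).congr_deriv ?_
  rw [opL, ← mul_assoc (Real.exp (-phase x)), ← Real.exp_add]
  simp
  ring

theorem hasDerivAt_opR {v : ℝ → ℝ} (hv : Continuous v)
    (hi : ∀ x, IntegrableOn (fun t => Real.exp (-phase t) * v t) (Ioi x)) (x : ℝ) :
    HasDerivAt (opR v) (drift x * opR v x - v x) x := by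
  have hc : Continuous fun t => Real.exp (-phase t) * v t :=
    (Real.continuous_exp.comp continuous_phase.neg).mul hv
  have h1 : HasDerivAt (fun x => ∫ t in Ioi x, Real.exp (-phase t) * v t)
      (-(Real.exp (-phase x) * v x)) x := by
    rw [integral_Ioi_eq hi]
    exact (intervalIntegral.integral_hasDerivAt_right (hc.intervalIntegrable _ _)
      (hc.stronglyMeasurableAtFilter _ _) hc.continuousAt).const_sub _
  refine ((hasDerivAt_phase x).exp.fun_mul h1).congr_deriv ?_
  rw [opR, mul_neg, ← mul_assoc (Real.exp (phase x)) (Real.exp (-phase x)), ← Real.exp_add]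
  simp
  ring

/-- Measurable functions lying between the two barriers. -/
structure Adm (q : ℝ → ℝ) : Prop where
  meas : Measurable q
  lower : ∀ x, bar (-2) x ≤ q x
  upper : ∀ x, q x ≤ bar 12 x

theorem continuous_bar (κ : ℝ) : Continuous (bar κ) :=
  continuous_iff_continuousAt.2 fun x => (hasDerivAt_bar κ x).continuousAt

theorem adm_upper : Adm (bar 12) :=
  ⟨(continuous_bar _).measurable, bar_lower_le_upper, fun _ => le_rfl⟩

theorem adm_lower : Adm (bar (-2)) :=
  ⟨(continuous_bar _).measurable, fun _ => le_rfl, bar_lower_le_upper⟩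

theorem Adm.nonneg {q : ℝ → ℝ} (h : Adm q) (x : ℝ) : 0 ≤ q x :=
  (bar_lower_pos x).le.trans (h.lower x)

theorem Adm.le {q : ℝ → ℝ} (h : Adm q) (x : ℝ) : q x ≤ 3 * eqQ x :=
  (h.upper x).trans (bar_upper_le x)

theorem Adm.src_nonneg {q : ℝ → ℝ} (h : Adm q) (x : ℝ) : 0 ≤ src x (q x) :=
  _root_.src_nonneg (h.nonneg x) (h.le x)

theorem Adm.src_mono {p q : ℝ → ℝ} (hp : Adm p) (hq : Adm q) {x : ℝ} (h : p x ≤ q x) :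
    src x (p x) ≤ src x (q x) := _root_.src_mono (hp.nonneg x) h (hq.le x)

/-- The supersolution inequality, integrated from `-∞`; it also provides the dominating function
for the first integral of every iterate. -/
theorem upper_Iic (x : ℝ) :
    IntegrableOn (fun t => Real.exp (phase t) * src t (bar 12 t)) (Iic x) ∧
    ∫ t in Iic x, Real.exp (phase t) * src t (bar 12 t) ≤
      Real.exp (phase x) * (drift x * bar 12 x - bar' 12 x) := by
  refine integral_Iic_le (hasDerivAt_exp_phase_mul (hasDerivAt_bar 12) (hasDerivAt_bar' 12))
    ((Real.continuous_exp.comp continuous_phase).mul (continuous_src (continuous_bar 12)))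
    (fun t => mul_nonneg (Real.exp_pos _).le (adm_upper.src_nonneg t))
    (fun t => mul_le_mul_of_nonneg_left ?_ (Real.exp_pos _).le)
    (tendsto_bar_atBot (by norm_num [abs_of_pos])) x
  have := bar_super t
  unfold src
  linarith

theorem Adm.measurable_src {q : ℝ → ℝ} (h : Adm q) :
    Measurable fun t => Real.exp (phase t) * src t (q t) := by
  have := h.meas
  have h2 := continuous_phase.measurable
  unfold src drift
  fun_prop

theorem Adm.src_le {q : ℝ → ℝ} (h : Adm q) (t : ℝ) :
    ‖Real.exp (phase t) * src t (q t)‖ ≤ Real.exp (phase t) * src t (bar 12 t) := by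
  rw [Real.norm_of_nonneg (mul_nonneg (Real.exp_pos _).le (h.src_nonneg t))]
  exact mul_le_mul_of_nonneg_left (h.src_mono adm_upper (h.upper t)) (Real.exp_pos _).le

theorem Adm.integrableOn_src {q : ℝ → ℝ} (h : Adm q) (x : ℝ) :
    IntegrableOn (fun t => Real.exp (phase t) * src t (q t)) (Iic x) :=
  (upper_Iic x).1.mono' h.measurable_src.aestronglyMeasurable (ae_of_all _ h.src_le)

/-- The intermediate function `v = drift w - w'` of the iteration step `w = step q`. -/
noncomputable def halfStep (q : ℝ → ℝ) : ℝ → ℝ := opL fun t => src t (q t)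

/-- The iteration map: `w = step q` solves `w'' - K w = f(x, q) - K q`. -/
noncomputable def step (q : ℝ → ℝ) : ℝ → ℝ := opR (halfStep q)

theorem Adm.continuous_halfStep {q : ℝ → ℝ} (h : Adm q) : Continuous (halfStep q) :=
  continuous_opL h.integrableOn_src

theorem Adm.halfStep_nonneg {q : ℝ → ℝ} (h : Adm q) (x : ℝ) : 0 ≤ halfStep q x :=
  mul_nonneg (Real.exp_pos _).le (setIntegral_nonneg measurableSet_Iic fun t _ =>
    mul_nonneg (Real.exp_pos _).le (h.src_nonneg t))

theorem Adm.halfStep_mono {p q : ℝ → ℝ} (hp : Adm p) (hq : Adm q) (h : ∀ x, p x ≤ q x) (x : ℝ) :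
    halfStep p x ≤ halfStep q x :=
  mul_le_mul_of_nonneg_left (setIntegral_mono (hp.integrableOn_src x) (hq.integrableOn_src x)
    fun t => mul_le_mul_of_nonneg_left (hp.src_mono hq (h t)) (Real.exp_pos _).le)
    (Real.exp_pos _).le

theorem halfStep_upper (x : ℝ) : halfStep (bar 12) x ≤ drift x * bar 12 x - bar' 12 x := by
  have := mul_le_mul_of_nonneg_left (upper_Iic x).2 (Real.exp_pos (-phase x)).le
  rwa [← mul_assoc, ← Real.exp_add, neg_add_cancel, Real.exp_zero, one_mul] at this

theorem halfStep_lower (x : ℝ) : drift x * bar (-2) x - bar' (-2) x ≤ halfStep (bar (-2)) x := by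
  have h := le_integral_Iic (hasDerivAt_exp_phase_mul (hasDerivAt_bar (-2)) (hasDerivAt_bar' (-2)))
    (adm_lower.integrableOn_src x) (fun t => mul_le_mul_of_nonneg_left (by
      have := bar_sub t
      unfold src
      linarith) (Real.exp_pos _).le)
    (tendsto_bar_atBot (by norm_num))
  have := mul_le_mul_of_nonneg_left h (Real.exp_pos (-phase x)).le
  rwa [← mul_assoc, ← Real.exp_add, neg_add_cancel, Real.exp_zero, one_mul] at this

/-- The bound on `halfStep` at the upper barrier, integrated from `+∞`; it also provides the
dominating function for the second integral of every iterate. -/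
theorem upper_Ioi (x : ℝ) :
    IntegrableOn (fun t => Real.exp (-phase t) * halfStep (bar 12) t) (Ioi x) ∧
    ∫ t in Ioi x, Real.exp (-phase t) * halfStep (bar 12) t ≤ Real.exp (-phase x) * bar 12 x := by
  refine integral_Ioi_le (hasDerivAt_exp_neg_phase_mul (hasDerivAt_bar 12))
    ((Real.continuous_exp.comp continuous_phase.neg).mul adm_upper.continuous_halfStep)
    (fun t => mul_nonneg (Real.exp_pos _).le (adm_upper.halfStep_nonneg t))
    (fun t => mul_le_mul_of_nonneg_left (halfStep_upper t) (Real.exp_pos _).le)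
    (tendsto_bar_atTop (by norm_num [abs_of_pos])) x

theorem Adm.halfStep_le {q : ℝ → ℝ} (h : Adm q) (t : ℝ) :
    ‖Real.exp (-phase t) * halfStep q t‖ ≤ Real.exp (-phase t) * halfStep (bar 12) t := by
  rw [Real.norm_of_nonneg (mul_nonneg (Real.exp_pos _).le (h.halfStep_nonneg t))]
  exact mul_le_mul_of_nonneg_left (h.halfStep_mono adm_upper h.upper t) (Real.exp_pos _).le

theorem Adm.measurable_halfStep {q : ℝ → ℝ} (h : Adm q) :
    Measurable fun t => Real.exp (-phase t) * halfStep q t :=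
  ((Real.continuous_exp.comp continuous_phase.neg).mul h.continuous_halfStep).measurable

theorem Adm.integrableOn_halfStep {q : ℝ → ℝ} (h : Adm q) (x : ℝ) :
    IntegrableOn (fun t => Real.exp (-phase t) * halfStep q t) (Ioi x) :=
  (upper_Ioi x).1.mono' h.measurable_halfStep.aestronglyMeasurable (ae_of_all _ h.halfStep_le)

theorem Adm.step_mono {p q : ℝ → ℝ} (hp : Adm p) (hq : Adm q) (h : ∀ x, p x ≤ q x) (x : ℝ) :
    step p x ≤ step q x :=
  mul_le_mul_of_nonneg_left (setIntegral_mono (hp.integrableOn_halfStep x)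
    (hq.integrableOn_halfStep x)
    fun t => mul_le_mul_of_nonneg_left (hp.halfStep_mono hq h t) (Real.exp_pos _).le)
    (Real.exp_pos _).le

theorem step_upper (x : ℝ) : step (bar 12) x ≤ bar 12 x := by
  have := mul_le_mul_of_nonneg_left (upper_Ioi x).2 (Real.exp_pos (phase x)).le
  rwa [← mul_assoc, ← Real.exp_add, add_neg_cancel, Real.exp_zero, one_mul] at this

theorem step_lower (x : ℝ) : bar (-2) x ≤ step (bar (-2)) x := by
  have h := le_integral_Ioi (hasDerivAt_exp_neg_phase_mul (hasDerivAt_bar (-2)))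
    (adm_lower.integrableOn_halfStep x)
    (fun t => mul_le_mul_of_nonneg_left (halfStep_lower t) (Real.exp_pos _).le)
    (tendsto_bar_atTop (by norm_num))
  have := mul_le_mul_of_nonneg_left h (Real.exp_pos (phase x)).le
  rwa [← mul_assoc, ← Real.exp_add, add_neg_cancel, Real.exp_zero, one_mul] at this

theorem Adm.hasDerivAt_step {q : ℝ → ℝ} (h : Adm q) (x : ℝ) :
    HasDerivAt (step q) (drift x * step q x - halfStep q x) x :=
  hasDerivAt_opR h.continuous_halfStep h.integrableOn_halfStep x

theorem Adm.step {q : ℝ → ℝ} (h : Adm q) : Adm (step q) where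
  meas := (continuous_iff_continuousAt.2 fun x => (h.hasDerivAt_step x).continuousAt).measurable
  lower x := (step_lower x).trans (adm_lower.step_mono h h.lower x)
  upper x := (h.step_mono adm_upper h.upper x).trans (step_upper x)

/-- The iterates of `step` starting from the upper barrier. -/
noncomputable def iter : ℕ → ℝ → ℝ
  | 0 => bar 12
  | n + 1 => step (iter n)

theorem adm_iter (n : ℕ) : Adm (iter n) := by
  induction n with
  | zero => exact adm_upper
  | succ n ih => exact ih.step

theorem iter_succ_le (n : ℕ) : ∀ x, iter (n + 1) x ≤ iter n x := by
  induction n with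
  | zero => exact step_upper
  | succ n ih => exact (adm_iter (n + 1)).step_mono (adm_iter n) ih

/-- The decreasing iterates converge pointwise, and dominated convergence in the two integrals
makes the limit a fixed point. -/
theorem exists_fixedPoint : ∃ q, Adm q ∧ ∀ x, step q x = q x := by
  have hlim : ∀ x, Tendsto (fun n => iter n x) atTop (𝓝 (⨅ n, iter n x)) := fun x =>
    tendsto_atTop_ciInf (antitone_nat_of_succ_le fun n => iter_succ_le n x)
      ⟨bar (-2) x, by rintro _ ⟨n, rfl⟩; exact (adm_iter n).lower x⟩
  set q : ℝ → ℝ := fun x => ⨅ n, iter n x with hq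
  have hA : Adm q :=
    ⟨measurable_of_tendsto_metrizable (fun n => (adm_iter n).meas) (tendsto_pi_nhds.2 hlim),
      fun x => ge_of_tendsto' (hlim x) fun n => (adm_iter n).lower x,
      fun x => le_of_tendsto' (hlim x) fun n => (adm_iter n).upper x⟩
  have h1 : ∀ x, Tendsto (fun n => halfStep (iter n) x) atTop (𝓝 (halfStep q x)) := by
    intro x
    refine Tendsto.const_mul _ (tendsto_integral_of_dominated_convergence _
      (fun n => (adm_iter n).measurable_src.aestronglyMeasurable) (upper_Iic x).1
      (fun n => ae_of_all _ (adm_iter n).src_le) (ae_of_all _ fun t => ?_))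
    have hc : Continuous fun y : ℝ => Real.exp (phase t) * src t y := by unfold src; fun_prop
    exact (hc.tendsto _).comp (hlim t)
  have h2 : ∀ x, Tendsto (fun n => step (iter n) x) atTop (𝓝 (step q x)) := by
    intro x
    exact Tendsto.const_mul _ (tendsto_integral_of_dominated_convergence _
      (fun n => (adm_iter n).measurable_halfStep.aestronglyMeasurable) (upper_Ioi x).1
      (fun n => ae_of_all _ (adm_iter n).halfStep_le)
      (ae_of_all _ fun t => (h1 t).const_mul _))
  exact ⟨q, hA, fun x => tendsto_nhds_unique (h2 x) ((hlim x).comp (tendsto_add_atTop_nat 1))⟩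

/-- A positive solution of `q'' = 2 q³ + x q - 1/2` trapped between the barriers. -/
theorem exists_trapped_solution : ∃ q q' : ℝ → ℝ, (∀ x, bar (-2) x ≤ q x ∧ q x ≤ bar 12 x) ∧
    (∀ x, HasDerivAt q (q' x) x) ∧
    ∀ x, HasDerivAt q' (2 * q x ^ 3 + x * q x - 1 / 2) x := by
  obtain ⟨q, hA, hfix⟩ := exists_fixedPoint
  have hfix' : step q = q := funext hfix
  have h1 : ∀ x, HasDerivAt q (drift x * q x - halfStep q x) x := by
    intro x
    have := hA.hasDerivAt_step x
    rwa [hfix'] at this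
  have hc : Continuous q := continuous_iff_continuousAt.2 fun x => (h1 x).continuousAt
  refine ⟨q, fun x => drift x * q x - halfStep q x, fun x => ⟨hA.lower x, hA.upper x⟩, h1, ?_⟩
  intro x
  have h2 := hasDerivAt_opL (continuous_src hc) hA.integrableOn_src x
  refine (((hasDerivAt_drift x).fun_mul (h1 x)).fun_sub h2).congr_deriv ?_
  simp only [halfStep, src]
  ring

/-! ### Asymptotics and the Hamiltonian -/

/-- Any function between the barriers is `12 Q P² (1 - P)`-close to `Q`. -/
theorem abs_sub_eqQ_le {x y : ℝ} (h : bar (-2) x ≤ y ∧ y ≤ bar 12 x) :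
    |y - eqQ x| ≤ 12 * (eqQ x * (eqP x ^ 2 * (1 - eqP x))) := by
  have h0 := eqQ_pos x
  have h1 := mul_nonneg h0.le (weight_nonneg_le x).1
  unfold bar at h
  rw [abs_le]
  constructor <;> nlinarith

theorem asymp_atTop {x y : ℝ} (hx : 1 < x) (h : bar (-2) x ≤ y ∧ y ≤ bar 12 x) :
    |y - 1 / (2 * x)| ≤ 8 * x ^ (-(5 : ℝ) / 2) := by
  have h0 := eqQ_pos x
  have hP := eqP_pos x
  have hP1 := eqP_lt_one x
  have hs := eqQ_spec x
  have hPs := eqP_spec x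
  have hx0 : 0 < x := by linarith
  have hQ : eqQ x ≤ 1 / (2 * x) := by
    rw [le_div_iff₀ (by positivity)]
    nlinarith [pow_pos h0 3]
  have hQ3 : eqQ x ^ 3 ≤ (1 / (2 * x)) ^ 3 := by gcongr
  have hQ4 : eqQ x ^ 4 ≤ (1 / (2 * x)) ^ 4 := by gcongr
  have h1 := abs_sub_eqQ_le h
  have h2 : eqQ x * (eqP x ^ 2 * (1 - eqP x)) ≤ 8 * eqQ x ^ 4 := by
    have e : 1 - eqP x = 8 * eqQ x ^ 3 * eqP x := by linarith
    have : eqP x ^ 3 ≤ 1 := pow_le_one₀ hP.le hP1.le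
    calc _ = 8 * eqQ x ^ 4 * eqP x ^ 3 := by rw [e]; ring
      _ ≤ 8 * eqQ x ^ 4 * 1 := by gcongr
      _ = _ := by ring
  have h3 : |eqQ x - 1 / (2 * x)| ≤ 1 / (4 * x ^ 4) := by
    have e : eqQ x - 1 / (2 * x) = -(2 * eqQ x ^ 3 / x) := by
      field_simp
      linarith
    rw [e, abs_neg, abs_of_pos (by positivity)]
    calc 2 * eqQ x ^ 3 / x ≤ 2 * (1 / (2 * x)) ^ 3 / x := by gcongr
      _ = _ := by field_simp; norm_num
  have h4 : (x ^ 4)⁻¹ ≤ x ^ (-(5 : ℝ) / 2) := by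
    rw [← Real.rpow_natCast, ← Real.rpow_neg hx0.le]
    exact Real.rpow_le_rpow_of_exponent_le hx.le (by norm_num)
  have h5 : |y - 1 / (2 * x)| ≤ |y - eqQ x| + |eqQ x - 1 / (2 * x)| := abs_sub_le _ _ _
  have e1 : (1 / (2 * x)) ^ 4 = (x ^ 4)⁻¹ / 16 := by field_simp; norm_num
  have e2 : 1 / (4 * x ^ 4) = (x ^ 4)⁻¹ / 4 := by field_simp
  rw [e1] at hQ4
  rw [e2] at h3
  have : 0 < (x ^ 4)⁻¹ := by positivity
  linarith

theorem eqQ_sub_sqrt {x s : ℝ} (hs : s ^ 2 = -x / 2) :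
    4 * eqQ x * ((eqQ x - s) * (eqQ x + s)) = 1 := by
  linear_combination 2 * eqQ_spec x - 4 * eqQ x * hs

theorem sqrt_lt_eqQ {x s : ℝ} (hs0 : 0 < s) (hs : s ^ 2 = -x / 2) : s < eqQ x := by
  have h0 := eqQ_pos x
  have h := eqQ_sub_sqrt hs
  by_contra! hc
  have : 0 ≤ 4 * eqQ x * ((s - eqQ x) * (eqQ x + s)) := by
    have := sub_nonneg.2 hc
    positivity
  linarith

/-- The lower barrier exceeds `√(-x/2)` on the negative half-line. -/
theorem sqrt_le_bar {x s : ℝ} (hs0 : 0 < s) (hs : s ^ 2 = -x / 2) : s ≤ bar (-2) x := by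
  have h0 := eqQ_pos x
  have h := eqQ_sub_sqrt hs
  have hlt := sqrt_lt_eqQ hs0 hs
  have hP := eqP_pos x
  have hP1 := eqP_lt_one x
  have hPs := eqP_spec x
  have h1 : 1 ≤ 8 * eqQ x ^ 2 * (eqQ x - s) := by
    have : 0 ≤ 4 * eqQ x * ((eqQ x - s) * (eqQ x - s)) := by positivity
    nlinarith
  have h2 : 16 * eqQ x ^ 3 * (eqP x ^ 2 * (1 - eqP x)) ≤ 1 := by
    have e : 8 * eqQ x ^ 3 * eqP x = 1 - eqP x := by linarith
    have : 16 * eqQ x ^ 3 * (eqP x ^ 2 * (1 - eqP x)) = 2 * eqP x * (1 - eqP x) ^ 2 := by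
      linear_combination 2 * eqP x * (1 - eqP x) * e
    rw [this]
    nlinarith [sq_nonneg (2 * eqP x - 1), mul_pos hP (sub_pos.2 hP1)]
  have h3 : 0 ≤ 8 * eqQ x ^ 2 * (bar (-2) x - s) := by
    unfold bar
    linarith
  have := nonneg_of_mul_nonneg_right h3 (by positivity)
  linarith

theorem asymp_sqrt {x s y : ℝ} (hs0 : 0 < s) (hs : s ^ 2 = -x / 2)
    (h : bar (-2) x ≤ y ∧ y ≤ bar 12 x) : |y - s - 1 / (8 * s ^ 2)| ≤ 1 / s ^ 5 := by
  have h0 := eqQ_pos x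
  have hq := eqQ_sub_sqrt hs
  have hlt := sqrt_lt_eqQ hs0 hs
  have hP := eqP_pos x
  have hP1 := eqP_lt_one x
  have hPs := eqP_spec x
  have h1 := abs_sub_eqQ_le h
  have h2 : eqQ x * (eqP x ^ 2 * (1 - eqP x)) ≤ 1 / (64 * s ^ 5) := by
    have e : eqP x ≤ 1 / (8 * eqQ x ^ 3) := by
      rw [le_div_iff₀ (by positivity)]
      linarith
    calc eqQ x * (eqP x ^ 2 * (1 - eqP x)) ≤ eqQ x * ((1 / (8 * eqQ x ^ 3)) ^ 2 * 1) := by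
          gcongr
          linarith
      _ = 1 / (64 * eqQ x ^ 5) := by field_simp; norm_num
      _ ≤ _ := by gcongr
  have h3 : eqQ x - s ≤ 1 / (8 * s ^ 2) := by
    rw [le_div_iff₀ (by positivity)]
    have : 4 * s * ((eqQ x - s) * (s + s)) ≤ 4 * eqQ x * ((eqQ x - s) * (eqQ x + s)) := by
      have := sub_pos.2 hlt
      gcongr
    nlinarith
  have h4 : |eqQ x - s - 1 / (8 * s ^ 2)| ≤ 1 / (32 * s ^ 5) := by
    rw [abs_of_nonpos (by linarith)]
    have hd := sub_pos.2 hlt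
    have e : 1 / (8 * s ^ 2) =
        (eqQ x - s) + (eqQ x - s) ^ 2 * (eqQ x + 2 * s) * eqQ x * (1 / (2 * s ^ 2 * eqQ x)) := by
      field_simp
      linear_combination (-2) * hq
    rw [e]
    have e3 : (eqQ x - s) ^ 2 * (eqQ x + 2 * s) * eqQ x * (1 / (2 * s ^ 2 * eqQ x))
        ≤ 1 / (32 * s ^ 5) := by
      have e4 : (eqQ x - s) * (eqQ x + 2 * s) ≤ 1 / (2 * eqQ x) := by
        rw [le_div_iff₀ (by positivity)]
        nlinarith [mul_pos h0 (mul_pos hd h0)]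
      calc _ = (eqQ x - s) * ((eqQ x - s) * (eqQ x + 2 * s)) * (1 / (2 * s ^ 2)) := by
            field_simp
        _ ≤ (1 / (8 * s ^ 2)) * (1 / (2 * s)) * (1 / (2 * s ^ 2)) := by
            gcongr
            exact e4.trans (by gcongr)
        _ = _ := by field_simp; norm_num
    linarith
  have h5 : |y - s - 1 / (8 * s ^ 2)| ≤ |y - eqQ x| + |eqQ x - s - 1 / (8 * s ^ 2)| := by
    have := abs_add_le (y - eqQ x) (eqQ x - s - 1 / (8 * s ^ 2))
    rwa [show y - eqQ x + (eqQ x - s - 1 / (8 * s ^ 2)) = y - s - 1 / (8 * s ^ 2) by ring] at this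
  have e1 : 1 / (64 * s ^ 5) = 1 / s ^ 5 / 64 := by field_simp
  have e2 : 1 / (32 * s ^ 5) = 1 / s ^ 5 / 32 := by field_simp
  rw [e1] at h2
  rw [e2] at h4
  have : 0 < 1 / s ^ 5 := by positivity
  linarith

theorem asymp_atBot {x y : ℝ} (hx : x < 0) (h : bar (-2) x ≤ y ∧ y ≤ bar 12 x) :
    |y - √(-x / 2) + 1 / (4 * x)| ≤ 8 * (-x) ^ (-(5 : ℝ) / 2) := by
  have hs0 : 0 < √(-x / 2) := Real.sqrt_pos.2 (by linarith)
  have hs : √(-x / 2) ^ 2 = -x / 2 := Real.sq_sqrt (by linarith)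
  have h1 := asymp_sqrt hs0 hs h
  have e1 : 1 / (8 * √(-x / 2) ^ 2) = -(1 / (4 * x)) := by
    rw [hs]
    have := hx.ne
    field_simp
    norm_num
  rw [e1, sub_neg_eq_add] at h1
  refine h1.trans ?_
  have hx' : 0 < -x := by linarith
  have hr0 : 0 < √(-x) := Real.sqrt_pos.2 hx'
  have hr : √(-x) ^ 2 = -x := Real.sq_sqrt hx'.le
  have e2 : (-x) ^ (-(5 : ℝ) / 2) = 1 / √(-x) ^ 5 := by
    rw [Real.sqrt_eq_rpow, ← Real.rpow_natCast, ← Real.rpow_mul hx'.le, one_div,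
      ← Real.rpow_neg hx'.le]
    norm_num
  rw [e2]
  have h3 : √(-x) ≤ 3 / 2 * √(-x / 2) := by
    apply le_of_sq_le_sq _ (by positivity)
    nlinarith
  have h4 : √(-x) ^ 5 ≤ (3 / 2 * √(-x / 2)) ^ 5 := by gcongr
  rw [mul_one_div, div_le_div_iff₀ (by positivity) (by positivity)]
  have : 0 < √(-x / 2) ^ 5 := by positivity
  nlinarith

theorem hasDerivAt_exponent {x : ℝ} (hx : x < 0) :
    HasDerivAt (fun x : ℝ => 2 * √2 / 3 * (-x) ^ ((3 : ℝ) / 2)) (-(2 * √(-x / 2))) x := by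
  refine (((hasDerivAt_neg x).rpow_const (p := 3 / 2) (Or.inl (by linarith))).const_mul
    (2 * √2 / 3)).congr_deriv ?_
  have h2 : √2 ^ 2 = 2 := Real.sq_sqrt (by norm_num)
  have h3 : (0 : ℝ) < √2 := by positivity
  rw [Real.sqrt_div (by linarith), show ((3 : ℝ) / 2 - 1) = 1 / 2 by norm_num,
    ← Real.sqrt_eq_rpow]
  field_simp
  rw [h2]

/-- `z = u' - u² - x/2` with `u = -q` satisfies `z' = 2 q z`; as `q ≥ √(-x/2)`, the product of
`z` with `exp ((2√2/3) (-x)^{3/2})` is nondecreasing in modulus on the negative half-line. -/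
theorem exists_decay {q q' : ℝ → ℝ} (hb : ∀ x, bar (-2) x ≤ q x ∧ q x ≤ bar 12 x)
    (hq : ∀ x, HasDerivAt q (q' x) x)
    (hq' : ∀ x, HasDerivAt q' (2 * q x ^ 3 + x * q x - 1 / 2) x) :
    ∃ D, 0 ≤ D ∧ ∀ x ≤ -1, |-q' x - q x ^ 2 - x / 2| ≤
      D * Real.exp (-(2 * √2 / 3) * (-x) ^ ((3 : ℝ) / 2)) := by
  set E : ℝ → ℝ := fun x => 2 * √2 / 3 * (-x) ^ ((3 : ℝ) / 2) with hE
  set φ : ℝ → ℝ := fun x => (-q' x - q x ^ 2 - x / 2) * Real.exp (E x) with hφ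
  have hd : ∀ x < 0, HasDerivAt (fun x => φ x ^ 2) (4 * (q x - √(-x / 2)) * φ x ^ 2) x := by
    intro x hx
    have h1 := ((hq' x).fun_neg.fun_sub ((hq x).fun_pow 2)).fun_sub ((hasDerivAt_id x).div_const 2)
    refine ((h1.fun_mul (hasDerivAt_exponent hx).exp).fun_pow 2).congr_deriv ?_
    simp only [hφ, hE, id]
    push_cast
    ring
  have hm : MonotoneOn (fun x => φ x ^ 2) (Iic (-1)) := by
    apply monotoneOn_of_deriv_nonneg (convex_Iic _)
    · exact fun x hx => (hd x (by linarith [mem_Iic.1 hx])).continuousAt.continuousWithinAt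
    · rw [interior_Iic]
      exact fun x hx => (hd x (by linarith [mem_Iio.1 hx])).differentiableAt.differentiableWithinAt
    · rw [interior_Iic]
      intro x hx
      have hx0 : x < 0 := by linarith [mem_Iio.1 hx]
      rw [(hd x hx0).deriv]
      have hs := (sqrt_le_bar (Real.sqrt_pos.2 (by linarith)) (Real.sq_sqrt (by linarith))).trans
        (hb x).1
      have := sub_nonneg.2 hs
      positivity
  refine ⟨|φ (-1)|, abs_nonneg _, fun x hx => ?_⟩
  have h1 : |φ x| ≤ |φ (-1)| := sq_le_sq.1 (hm (mem_Iic.2 hx) (mem_Iic.2 le_rfl) hx)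
  have h2 : -q' x - q x ^ 2 - x / 2 = φ x * Real.exp (-(2 * √2 / 3) * (-x) ^ ((3 : ℝ) / 2)) := by
    simp only [hφ, hE]
    rw [mul_assoc, ← Real.exp_add, neg_mul, add_neg_cancel, Real.exp_zero, mul_one]
  rw [h2, abs_mul, Real.abs_exp]
  exact mul_le_mul_of_nonneg_right h1 (Real.exp_pos _).le

/-- Reduced form of the Hamiltonian of `u = -q`. -/
theorem hamiltonian_eq {q q' : ℝ → ℝ} (hq : ∀ x, HasDerivAt q (q' x) x) (x : ℝ) :
    hmHamiltonian 0 (fun x => -(q x : ℂ)) x =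
      (((-q' x - q x ^ 2 - x / 2) * ((-q' x - q x ^ 2 - x / 2) / 2 + (q x ^ 2 + x / 2)) : ℝ) : ℂ) := by
  have h : deriv (fun x => -(q x : ℂ)) x = -(q' x : ℂ) := ((hq x).ofReal_comp.fun_neg).deriv
  rw [hmHamiltonian, h]
  push_cast
  ring

theorem sq_add_half_le {x y : ℝ} (hx : x < -2) (h : bar (-2) x ≤ y ∧ y ≤ bar 12 x) :
    |y ^ 2 + x / 2| ≤ 8 * (-x) ^ ((1 : ℝ) / 2) := by
  have hs0 : 0 < √(-x / 2) := Real.sqrt_pos.2 (by linarith)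
  have hs : √(-x / 2) ^ 2 = -x / 2 := Real.sq_sqrt (by linarith)
  have h1 := (abs_le.1 (asymp_sqrt hs0 hs h)).2
  have h2 := (sqrt_le_bar hs0 hs).trans h.1
  have hle : √(-x / 2) ≤ √(-x) := Real.sqrt_le_sqrt (by linarith)
  rw [← Real.sqrt_eq_rpow]
  have hs1 : 1 ≤ √(-x / 2) := Real.one_le_sqrt.2 (by linarith)
  generalize √(-x / 2) = s at *
  have e1 : 1 / (8 * s ^ 2) ≤ 1 / (8 * 1 ^ 2) / s := by
    rw [div_div]
    apply one_div_le_one_div_of_le (by positivity)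
    nlinarith
  have e2 : 1 / s ^ 5 ≤ 1 / s := by
    apply one_div_le_one_div_of_le (by positivity)
    exact le_self_pow₀ hs1 (by norm_num)
  have e3 : 1 / s ≤ 1 := by rw [div_le_one hs0]; exact hs1
  have h3 : y - s ≤ 2 := by
    have e4 : 1 / (8 * 1 ^ 2) / s = 1 / s / 8 := by field_simp
    linarith
  have e : y ^ 2 + x / 2 = (y - s) * (y + s) := by linear_combination hs
  rw [e, abs_of_nonneg (mul_nonneg (by linarith) (by linarith))]
  calc (y - s) * (y + s) ≤ 2 * (4 * s) := by
        apply mul_le_mul h3 (by linarith) (by linarith) (by norm_num)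
    _ ≤ _ := by linarith

/-- there exists a Hastings–McLeod solution `u` of the inhomogeneous Painlevé II
equation with parameter `1/2` (the case `ν = 0`), with
`u(x) = -√(-x/2) + 1/(4x) + O((-x)^{-5/2})` as `x → -∞`, and whose Hamiltonian satisfies the
exponentially small bound `|H(x)| ≤ C(-x)^{1/2} e^{-(2√2/3)(-x)^{3/2}}` as `x → -∞`. -/
theorem exists_hastingsMcLeod_nu_zero :
    ∃ (U : Set ℝ) (u : ℝ → ℂ), IsHMSolution 0 U u ∧
      ∃ M : ℝ, 0 < M ∧ ∃ C : ℝ, 0 < C ∧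
        (∀ x : ℝ, x < -M →
          ‖u x + (Real.sqrt (-x / 2) : ℂ) - 1 / (4 * (x : ℂ))‖ ≤ C * (-x) ^ (-(5 : ℝ) / 2)) ∧
        (∀ x : ℝ, x < -M →
          ‖hmHamiltonian 0 u x‖ ≤
            C * (-x) ^ ((1 : ℝ) / 2) *
              Real.exp (-(2 * Real.sqrt 2 / 3) * (-x) ^ ((3 : ℝ) / 2))) := by
  obtain ⟨q, q', hb, hq, hq'⟩ := exists_trapped_solution
  obtain ⟨D, hD0, hD⟩ := exists_decay hb hq hq'
  have hu : ∀ x, HasDerivAt (fun x => -(q x : ℂ)) (-(q' x : ℂ)) x :=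
    fun x => (hq x).ofReal_comp.fun_neg
  have hu' : ∀ x, HasDerivAt (fun x => -(q' x : ℂ))
      (-((2 * q x ^ 3 + x * q x - 1 / 2 : ℝ) : ℂ)) x :=
    fun x => (hq' x).ofReal_comp.fun_neg
  have hdu : deriv (fun x => -(q x : ℂ)) = fun x => -(q' x : ℂ) := funext fun x => (hu x).deriv
  have hddu : deriv (fun x => -(q' x : ℂ)) =
      fun x => -((2 * q x ^ 3 + x * q x - 1 / 2 : ℝ) : ℂ) := funext fun x => (hu' x).deriv
  have hqc : Continuous q := continuous_iff_continuousAt.2 fun x => (hq x).continuousAt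
  have hminus : ∀ x < (0 : ℝ), ‖-(q x : ℂ) + (Real.sqrt (-x / 2) : ℂ) - 1 / (4 * (x : ℂ))‖ ≤
      8 * (-x) ^ (-(5 : ℝ) / 2) := by
    intro x hx
    have e : -(q x : ℂ) + (Real.sqrt (-x / 2) : ℂ) - 1 / (4 * (x : ℂ)) =
        ((-(q x - √(-x / 2) + 1 / (4 * x)) : ℝ) : ℂ) := by
      push_cast; ring
    rw [e, Complex.norm_real, norm_neg]
    exact asymp_atBot hx (hb x)
  refine ⟨univ, fun x => -(q x : ℂ), ⟨isOpen_univ, ?_, ?_, ?_, 1, one_pos, 8, by norm_num,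
    subset_univ _, ?_, ?_⟩, 2, two_pos, 8 + D * (D / 2 + 8), by positivity, ?_, ?_⟩
  · rw [compl_univ]
    infer_instance
  · apply ContDiff.contDiffOn
    rw [show (2 : WithTop ℕ∞) = 1 + 1 by norm_num, contDiff_succ_iff_deriv]
    refine ⟨fun x => (hu x).differentiableAt, by simp, ?_⟩
    rw [hdu, contDiff_one_iff_deriv, hddu]
    refine ⟨fun x => (hu' x).differentiableAt, ?_⟩
    fun_prop
  · intro x _
    rw [hdu, hddu]
    push_cast
    ring
  · intro x hx
    have e : -(q x : ℂ) + (0 + 1 / 2) / (x : ℂ) = ((-(q x - 1 / (2 * x)) : ℝ) : ℂ) := by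
      push_cast; ring
    rw [e, Complex.norm_real, norm_neg]
    exact asymp_atTop hx (hb x)
  · intro x hx
    have hsign : hmSign 0 = -1 := if_pos ⟨0, by simp⟩
    have e : -(q x : ℂ) - hmSign 0 * (Real.sqrt (-x / 2) : ℂ) - (0 + 1 / 2) / (2 * (x : ℂ)) =
        -(q x : ℂ) + (Real.sqrt (-x / 2) : ℂ) - 1 / (4 * (x : ℂ)) := by
      rw [hsign]; ring
    rw [e]
    exact hminus x (by linarith)
  · intro x hx
    refine (hminus x (by linarith)).trans ?_
    have : 0 ≤ D * (D / 2 + 8) := by positivity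
    have : 0 < (-x) ^ (-(5 : ℝ) / 2) := Real.rpow_pos_of_pos (by linarith) _
    gcongr
    linarith
  · intro x hx
    rw [hamiltonian_eq hq, Complex.norm_real, norm_mul, Real.norm_eq_abs, Real.norm_eq_abs]
    have h1 := hD x (by linarith)
    have h2 := sq_add_half_le hx (hb x)
    have hr : 1 ≤ (-x) ^ ((1 : ℝ) / 2) := Real.one_le_rpow (by linarith) (by norm_num)
    have he : Real.exp (-(2 * √2 / 3) * (-x) ^ ((3 : ℝ) / 2)) ≤ 1 := by
      rw [Real.exp_le_one_iff, neg_mul, neg_nonpos]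
      have : 0 < -x := by linarith
      positivity
    generalize -q' x - q x ^ 2 - x / 2 = z at *
    have hpos := Real.exp_pos (-(2 * √2 / 3) * (-x) ^ ((3 : ℝ) / 2))
    generalize Real.exp (-(2 * √2 / 3) * (-x) ^ ((3 : ℝ) / 2)) = e at *
    generalize (-x) ^ ((1 : ℝ) / 2) = r at *
    have he0 : 0 ≤ D * e := (abs_nonneg _).trans h1
    have h3 : |z / 2 + (q x ^ 2 + x / 2)| ≤ (D / 2 + 8) * r := by
      refine (abs_add_le _ _).trans ?_
      rw [abs_div, abs_two]
      have : D * e ≤ D * 1 := by gcongr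
      nlinarith
    calc |z| * |z / 2 + (q x ^ 2 + x / 2)| ≤ D * e * ((D / 2 + 8) * r) :=
          mul_le_mul h1 h3 (abs_nonneg _) he0
      _ ≤ D * e * ((D / 2 + 8) * r) + 8 * r * e := by
          have : 0 ≤ 8 * r * e := by positivity
          linarith
      _ = _ := by ring
end
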